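/- arXiv:math/0610780 — 2 statements merged into one kernel-verified Lean document; each statement's English description precedes it below -/
import Mathlib

section
/- For n ≥ 2, the number of parking functions a of length n with a_1 > a_2 equals the number of regions R of the Shi arrangement S_n such that x_1 − x_2 < 0 for all x ∈ R. -/
/-!
The Athanasiadis–Linusson bijection between regions of the Shi arrangement and parking functions
matches the two sets. List the coordinates of a point `x` off the hyperplanes in decreasing order
and draw an arc from `i` to `j` when `i < j` and `0 < x i - x j < 1`. The region of `x` is
determined by the order of the coordinates and the arcs, hence by the order and the maximal arcs.
Maximal arcs do not nest, so they cut the indices into chains, along which the indices increase.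
Let `f` send each index to the position of the head of its chain. It is a parking function because
no index precedes the head of its chain.

The order can be recovered from `f`: the heads of the fibres of `f` sit at the positions given by
their values, and every other index waits for its predecessor in the fibre. As maximal arcs do
not nest, the waiting indices are served first in, first out, which leaves only one possible
order. The parking condition says that this queue never runs dry, so every parking function has
such an order. It comes from a point: choosing the coordinates one after another, two of them can
be kept less than `1` apart exactly when they lie within a pair of consecutive elements of a fibre.

The first index is always a head, and the second one is a head unless its predecessor is the first.
Hence `f 1 < f 0` exactly when `x 0 < x 1`.
-/

/-- The complement of the union of the hyperplanes of the Shi arrangement `S_n`: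
the hyperplanes are `x i - x j = c` for `i < j` and `c ∈ {0, 1}`. -/
def shiComp (n : ℕ) : Set (Fin n → ℝ) :=
  {x | ∀ i j : Fin n, i < j → x i - x j ≠ 0 ∧ x i - x j ≠ 1}

/-- A region of the Shi arrangement: a connected component of the complement of
the union of the hyperplanes. -/
def IsShiRegion (n : ℕ) (R : Set (Fin n → ℝ)) : Prop :=
  ∃ x ∈ shiComp n, R = connectedComponentIn (shiComp n) x

/-- A parking function of length `n`: a function `a : Fin n → ℕ` such that for
every `k ≤ n`, at least `k` of the entries are `< k`. -/
def IsPF (n : ℕ) (a : Fin n → ℕ) : Prop :=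
  ∀ k : ℕ, k ≤ n → k ≤ (Finset.univ.filter (fun i => a i < k)).card

open Finset Function Relation

lemma ncard_image_eq_ncard_image {α β γ : Type*} {s : Set α} {f : α → β} {g : α → γ}
    (h : ∀ x ∈ s, ∀ y ∈ s, f x = f y ↔ g x = g y) : (f '' s).ncard = (g '' s).ncard := by
  choose u hu hfu using fun b (hb : b ∈ f '' s) => hb
  refine Set.ncard_congr (fun b hb => g (u b hb)) (fun b hb => ⟨u b hb, hu b hb, rfl⟩) ?_ ?_
  · intro b b' hb hb' hg
    rw [← hfu b hb, ← hfu b' hb', (h _ (hu b hb) _ (hu b' hb')).2 hg]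
  · rintro _ ⟨x, hx, rfl⟩
    have hfx : f x ∈ f '' s := ⟨x, hx, rfl⟩
    exact ⟨f x, hfx, (h _ (hu _ hfx) x hx).1 (hfu _ hfx)⟩

lemma exists_fin_seq_of_forall_exists_next {α : Type*} (step : ∀ q : ℕ, (Fin q → α) → α → Prop)
    (m : ℕ) (hnext : ∀ q < m, ∀ w : Fin q → α,
      (∀ r : Fin q, step r (fun s => w (s.castLE r.2.le)) (w r)) → ∃ v, step q w v) :
    ∃ w : Fin m → α, ∀ q : Fin m, step q (fun s => w (s.castLE q.2.le)) (w q) := by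
  induction m with
  | zero => exact ⟨Fin.elim0, fun q => q.elim0⟩
  | succ m ih =>
    obtain ⟨w, hw⟩ := ih fun q hq => hnext q (hq.trans m.lt_succ_self)
    obtain ⟨v, hv⟩ := hnext m m.lt_succ_self w hw
    have hsnoc (q : ℕ) (hq : q ≤ m) (s : Fin q) :
        Fin.snoc (α := fun _ => α) w v (s.castLE (hq.trans m.le_succ)) = w (s.castLE hq) :=
      Fin.snoc_castSucc (α := fun _ => α) v w (s.castLE hq)
    refine ⟨Fin.snoc (α := fun _ => α) w v, Fin.lastCases ?_ fun q => ?_⟩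
    · simpa only [Fin.snoc_last, Fin.val_last, hsnoc m le_rfl, Fin.castLE_rfl, id_eq] using hv
    · simpa only [Fin.snoc_castSucc, Fin.val_castSucc, hsnoc q q.2.le] using hw q

/-! ### Regions of a hyperplane arrangement -/

section Arrangement

lemma lt_of_isPreconnected_of_forall_ne {X α : Type*} [TopologicalSpace X] [LinearOrder α]
    [TopologicalSpace α] [OrderClosedTopology α] {s : Set X} (hs : IsPreconnected s) {g : X → α}
    (hg : ContinuousOn g s) {c : α} (hc : ∀ z ∈ s, g z ≠ c) {x y : X} (hx : x ∈ s) (hy : y ∈ s)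
    (hxc : g x < c) : g y < c := by
  by_contra! hyc
  obtain ⟨z, hz, hzc⟩ := hs.intermediate_value hx hy hg ⟨hxc.le, hyc⟩
  exact hc z hz hzc

variable {κ E : Type*} [AddCommGroup E] [Module ℝ E] [TopologicalSpace E]

/-- The complement of the affine hyperplane arrangement with hyperplanes `ℓ k = c k`. -/
def arrangementCompl (ℓ : κ → E →L[ℝ] ℝ) (c : κ → ℝ) : Set E := {x | ∀ k, ℓ k x ≠ c k}

variable {ℓ : κ → E →L[ℝ] ℝ} {c : κ → ℝ} {x y : E}

lemma lt_iff_lt_of_mem_connectedComponentIn (hx : x ∈ arrangementCompl ℓ c)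
    (hy : y ∈ connectedComponentIn (arrangementCompl ℓ c) x) (k : κ) :
    ℓ k x < c k ↔ ℓ k y < c k := by
  have hne : ∀ z ∈ connectedComponentIn (arrangementCompl ℓ c) x, ℓ k z ≠ c k :=
    fun z hz => connectedComponentIn_subset _ _ hz k
  exact ⟨lt_of_isPreconnected_of_forall_ne isPreconnected_connectedComponentIn
      (ℓ k).continuous.continuousOn hne (mem_connectedComponentIn hx) hy,
    lt_of_isPreconnected_of_forall_ne isPreconnected_connectedComponentIn
      (ℓ k).continuous.continuousOn hne hy (mem_connectedComponentIn hx)⟩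

lemma segment_subset_arrangementCompl (hx : x ∈ arrangementCompl ℓ c)
    (hy : y ∈ arrangementCompl ℓ c) (h : ∀ k, ℓ k x < c k ↔ ℓ k y < c k) :
    segment ℝ x y ⊆ arrangementCompl ℓ c := by
  intro z hz k
  rcases (hx k).lt_or_gt with hxk | hxk
  · exact ((convex_halfSpace_lt (ℓ k).isLinear (c k)).segment_subset hxk ((h k).1 hxk) hz).ne
  · have hyk : c k < ℓ k y := (hy k).lt_of_le' (not_lt.1 fun hyk => hxk.not_gt ((h k).2 hyk))
    exact ((convex_halfSpace_gt (ℓ k).isLinear (c k)).segment_subset hxk hyk hz).ne'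

lemma connectedComponentIn_arrangementCompl_eq_iff [IsTopologicalAddGroup E] [ContinuousSMul ℝ E]
    (hx : x ∈ arrangementCompl ℓ c) (hy : y ∈ arrangementCompl ℓ c) :
    connectedComponentIn (arrangementCompl ℓ c) x = connectedComponentIn (arrangementCompl ℓ c) y ↔
      ∀ k, ℓ k x < c k ↔ ℓ k y < c k where
  mp h := lt_iff_lt_of_mem_connectedComponentIn hx (h ▸ mem_connectedComponentIn hy)
  mpr h := connectedComponentIn_eq <|
    (convex_segment x y).isPreconnected.subset_connectedComponentIn (left_mem_segment ℝ x y)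
      (segment_subset_arrangementCompl hx hy h) (right_mem_segment ℝ x y)

end Arrangement

/-! ### Fibres and chains -/

section Fiber

variable {ι β γ : Type*}

/-- `k` and `l` are consecutive elements of a fibre of `f`. -/
def FiberCovBy [LT ι] (f : ι → β) (k l : ι) : Prop :=
  k < l ∧ f k = f l ∧ ∀ m, k < m → m < l → f m ≠ f l

/-- `i` is the least element of its fibre under `f`. -/
def IsFiberHead [LT ι] (f : ι → β) (i : ι) : Prop := ∀ k < i, f k ≠ f i

lemma fiberCovBy_comp_iff [LT ι] {g : β → γ} (hg : Injective g) {f : ι → β} {k l : ι} :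
    FiberCovBy (g ∘ f) k l ↔ FiberCovBy f k l := by
  simp only [FiberCovBy, comp_apply, ne_eq, hg.eq_iff]

variable [LinearOrder ι] {f : ι → β} {i j k k' l l' : ι}

lemma FiberCovBy.left_unique (h : FiberCovBy f k l) (h' : FiberCovBy f k' l) : k = k' := by
  rcases lt_trichotomy k k' with hk | hk | hk
  · exact absurd h'.2.1 (h.2.2 k' hk h'.1)
  · exact hk
  · exact absurd h.2.1 (h'.2.2 k hk h.1)

lemma FiberCovBy.right_unique (h : FiberCovBy f k l) (h' : FiberCovBy f k l') : l = l' := by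
  have hl : f l = f l' := h.2.1.symm.trans h'.2.1
  rcases lt_trichotomy l l' with hlt | heq | hlt
  · exact absurd hl (h'.2.2 l h.1 hlt)
  · exact heq
  · exact absurd hl.symm (h.2.2 l' h'.1 hlt)

lemma IsFiberHead.eq (hi : IsFiberHead f i) (hj : IsFiberHead f j) (h : f i = f j) : i = j := by
  rcases lt_trichotomy i j with hij | hij | hij
  · exact absurd h (hj i hij)
  · exact hij
  · exact absurd h.symm (hi j hij)

lemma not_isFiberHead_iff [Finite ι] : ¬ IsFiberHead f i ↔ ∃ k, FiberCovBy f k i := by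
  refine ⟨fun h => ?_, fun ⟨k, hk⟩ h => h k hk.1 hk.2.1⟩
  obtain ⟨k₀, hk₀, hfk₀⟩ : ∃ k < i, f k = f i := by simpa [IsFiberHead] using h
  obtain ⟨k, ⟨hki, hfk⟩, hmax⟩ :=
    WellFounded.has_min (wellFounded_gt (α := ι)) {k | k < i ∧ f k = f i} ⟨k₀, hk₀, hfk₀⟩
  exact ⟨k, hki, hfk, fun m hkm hmi hfm => hmax m ⟨hmi, hfm⟩ hkm⟩

lemma exists_isFiberHead [Finite ι] (f : ι → β) (i : ι) : ∃ h, IsFiberHead f h ∧ f h = f i := by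
  obtain ⟨h, hh, hmin⟩ := WellFounded.has_min (wellFounded_lt (α := ι)) {h | f h = f i} ⟨i, rfl⟩
  exact ⟨h, fun k hk hfk => hmin k (hfk.trans hh) hk, hh⟩

end Fiber

section Chain

variable {ι : Type*} {r : ι → ι → Prop} {i j k l : ι}

lemma le_of_reflTransGen [Preorder ι] (hlt : ∀ k l, r k l → k < l) (h : ReflTransGen r i j) :
    i ≤ j := by
  induction h with
  | refl => exact le_rfl
  | tail _ h ih => exact ih.trans (hlt _ _ h).le

/-- The starting point of a maximal chain `a r b r ⋯ r i` ending in `i`. -/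
noncomputable def chainHead (r : ι → ι → Prop) [IsWellFounded ι r] (i : ι) : ι :=
  (IsWellFounded.wf (r := r)).min {a | ReflTransGen r a i} ⟨i, .refl⟩

variable [IsWellFounded ι r]

lemma reflTransGen_chainHead (i : ι) : ReflTransGen r (chainHead r i) i :=
  WellFounded.min_mem _ {a | ReflTransGen r a i} _

lemma not_rel_chainHead : ¬ r k (chainHead r i) := fun h =>
  WellFounded.not_lt_min (IsWellFounded.wf (r := r)) {a | ReflTransGen r a i}
    (.head h (reflTransGen_chainHead i)) h

lemma chainHead_eq_self (hi : ∀ k, ¬ r k i) : chainHead r i = i := by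
  rcases (reflTransGen_chainHead (r := r) i).cases_tail with h | ⟨k, -, hk⟩
  · exact h.symm
  · exact absurd hk (hi k)

lemma chainHead_eq_of_reflTransGen (hr : Relator.LeftUnique r) (h : ReflTransGen r k i)
    (hk : ∀ a, ¬ r a k) : chainHead r i = k := by
  have hswap : Relator.RightUnique (swap r) := fun _ _ _ h h' => hr h h'
  rcases ReflTransGen.total_of_right_unique hswap (reflTransGen_swap.2 h)
    (reflTransGen_swap.2 (reflTransGen_chainHead i)) with h | h
  · rcases (reflTransGen_swap.1 h).cases_tail with h | ⟨a, -, ha⟩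
    · exact h.symm
    · exact absurd ha (hk a)
  · rcases (reflTransGen_swap.1 h).cases_tail with h | ⟨a, -, ha⟩
    · exact h
    · exact absurd ha not_rel_chainHead

lemma chainHead_eq_of_rel (hr : Relator.LeftUnique r) (h : r k l) :
    chainHead r l = chainHead r k :=
  chainHead_eq_of_reflTransGen hr ((reflTransGen_chainHead k).tail h) fun _ => not_rel_chainHead

variable [LinearOrder ι]

lemma exists_rel_of_chainHead_eq (hr : Relator.RightUnique r) (hlt : ∀ k l, r k l → k < l)
    (hij : i < j) (h : chainHead r i = chainHead r j) : ∃ k, r k j ∧ i ≤ k := by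
  have hchain : ReflTransGen r i j :=
    (ReflTransGen.total_of_right_unique hr (reflTransGen_chainHead i)
      (h ▸ reflTransGen_chainHead j)).resolve_right
      fun hji => hij.not_ge (le_of_reflTransGen hlt hji)
  rcases hchain.cases_tail with heq | ⟨k, hik, hkj⟩
  · exact absurd heq hij.ne'
  · exact ⟨k, hkj, le_of_reflTransGen hlt hik⟩

lemma fiberCovBy_chainHead_iff (hr : Relator.BiUnique r) (hlt : ∀ k l, r k l → k < l) :
    FiberCovBy (chainHead r) k l ↔ r k l := by
  constructor
  · rintro ⟨hkl, heq, hbetween⟩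
    obtain ⟨k', hk'l, hkk'⟩ := exists_rel_of_chainHead_eq hr.2 hlt hkl heq
    rcases hkk'.eq_or_lt with rfl | hkk'
    · exact hk'l
    · exact absurd (chainHead_eq_of_rel hr.1 hk'l).symm (hbetween k' hkk' (hlt _ _ hk'l))
  · refine fun h => ⟨hlt k l h, (chainHead_eq_of_rel hr.1 h).symm, fun m hkm hml heq => ?_⟩
    obtain ⟨k', hk'l, hmk'⟩ := exists_rel_of_chainHead_eq hr.2 hlt hml heq
    exact hkm.not_ge (hr.1 hk'l h ▸ hmk')

end Chain

/-! ### First-in-first-out orders of a parking function -/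

section Enumeration

variable {ι : Type*} [Fintype ι] {p : ι → ℕ}

lemma image_univ_eq_range_card (hp : Injective p) (hlt : ∀ i, p i < Fintype.card ι) :
    univ.image p = range (Fintype.card ι) := by
  refine eq_of_subset_of_card_le (fun q hq => ?_) ?_
  · obtain ⟨i, -, rfl⟩ := mem_image.1 hq
    exact mem_range.2 (hlt i)
  · rw [card_image_of_injective _ hp, card_range, card_univ]

lemma card_filter_lt_of_injective (hp : Injective p) (hlt : ∀ i, p i < Fintype.card ι) {q : ℕ}
    (hq : q ≤ Fintype.card ι) : #{i | p i < q} = q := by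
  have himage : image p {i | p i < q} = range q := by
    rw [← filter_image (p := (· < q)), image_univ_eq_range_card hp hlt]
    ext r
    simp only [mem_filter, mem_range]
    omega
  rw [← card_image_of_injective _ hp, himage, card_range]

end Enumeration

lemma IsPF.exists_notMem_le {n : ℕ} {f : Fin n → ℕ} (hf : IsPF n f) {q : ℕ} (hq : q < n)
    {s : Finset (Fin n)} (hs : #s ≤ q) : ∃ i ∉ s, f i ≤ q := by
  by_contra! h
  have hsub : ({i | f i < q + 1} : Finset (Fin n)) ⊆ s := fun i hi => by
    by_contra his
    exact (h i his).not_ge (Nat.lt_succ_iff.1 (mem_filter.1 hi).2)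
  have := (hf (q + 1) hq).trans (card_le_card hsub)
  omega

/-- An enumeration `p` of the indices, from position `0` on, in which the head of each fibre of `f`
sits at the position given by its value under `f`, and the other indices queue up after their
predecessors in the fibre in first-in-first-out order. -/
structure IsFIFO {ι : Type*} [Fintype ι] [LT ι] (f p : ι → ℕ) : Prop where
  injective : Injective p
  lt_card : ∀ i, p i < Fintype.card ι
  head_eq : ∀ i, IsFiberHead f i → f i = p i
  lt_of_fiberCovBy : ∀ k l, FiberCovBy f k l → p k < p l
  lt_of_lt : ∀ k l k' l', FiberCovBy f k l → FiberCovBy f k' l' → p k < p k' → p l < p l'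

namespace IsFIFO

section Fintype

variable {ι : Type*} [Fintype ι] [LinearOrder ι] {f p q : ι → ℕ}

lemma exists_eq (hp : IsFIFO f p) {m : ℕ} (hm : m < Fintype.card ι) : ∃ i, p i = m := by
  have := mem_range.2 hm
  rw [← image_univ_eq_range_card hp.injective hp.lt_card] at this
  simpa using this

lemma le (hp : IsFIFO f p) (i : ι) : f i ≤ p i := by
  induction i using WellFoundedLT.induction with
  | ind i ih =>
    by_cases hi : IsFiberHead f i
    · exact (hp.head_eq i hi).le
    · obtain ⟨k, hk⟩ := not_isFiberHead_iff.1 hi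
      exact hk.2.1 ▸ (ih k hk.1).trans (hp.lt_of_fiberCovBy k i hk).le

/-- Let `i` and `j` be placed at position `m` by `p` and by `q`. If they differ, neither is a head,
so they are the first to leave the queue at time `m` in the two orders. As the queues agree up to
then, `i = j`. -/
lemma eq_of_forall_lt (hp : IsFIFO f p) (hq : IsFIFO f q) {m : ℕ}
    (h : ∀ j, p j < m ∨ q j < m → p j = q j) {i : ι} (hi : p i = m) : q i = m := by
  obtain ⟨j, hj⟩ := hq.exists_eq (hi ▸ hp.lt_card i)
  by_contra hne
  have hij : i ≠ j := by
    rintro rfl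
    exact hne hj
  have hqi : m < q i := by
    by_contra hqi
    have := h i (.inr (by omega))
    omega
  have hpj : m < p j := by
    by_contra hpj
    have := hp.injective.ne hij
    have := h j (.inl (by omega))
    omega
  obtain ⟨k, hk⟩ : ∃ k, FiberCovBy f k i := not_isFiberHead_iff.1 fun hhead => by
    have := hp.head_eq i hhead
    have := hq.head_eq i hhead
    omega
  obtain ⟨k', hk'⟩ : ∃ k', FiberCovBy f k' j := not_isFiberHead_iff.1 fun hhead => by
    have := hp.head_eq j hhead
    have := hq.head_eq j hhead
    omega
  have hpk : p k = q k := h k (.inl (hi ▸ hp.lt_of_fiberCovBy k i hk))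
  have hpk' : p k' = q k' := h k' (.inr (hj ▸ hq.lt_of_fiberCovBy k' j hk'))
  rcases lt_trichotomy (p k) (p k') with hlt | heq | hlt
  · have := hq.lt_of_lt k i k' j hk hk' (by omega)
    omega
  · obtain rfl := hp.injective heq
    exact hij (hk.right_unique hk')
  · have := hp.lt_of_lt k' j k i hk' hk hlt
    omega

theorem unique (hp : IsFIFO f p) (hq : IsFIFO f q) : p = q := by
  suffices ∀ m i, p i = m ∨ q i = m → p i = q i from funext fun i => this _ i (.inl rfl)
  intro m
  induction m using Nat.strong_induction_on with
  | _ m ih =>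
    have hlt (j : ι) (hj : p j < m ∨ q j < m) : p j = q j :=
      hj.elim (fun hj => ih _ hj j (.inl rfl)) fun hj => ih _ hj j (.inr rfl)
    rintro i (hi | hi)
    · rw [hi, eq_of_forall_lt hp hq hlt hi]
    · rw [hi, eq_of_forall_lt hq hp (fun j hj => (hlt j hj.symm).symm) hi]

end Fintype

lemma isPF {n : ℕ} {f p : Fin n → ℕ} (hp : IsFIFO f p) : IsPF n f := by
  intro m hm
  calc m = #{i | p i < m} :=
        (card_filter_lt_of_injective hp.injective hp.lt_card (by simpa using hm)).symm
    _ ≤ #{i | f i < m} :=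
        card_le_card (monotone_filter_right _ fun _ _ hi => (hp.le _).trans_lt hi)

end IsFIFO

section Queue

variable {n : ℕ} {f : Fin n → ℕ}

/-- After `w 0, …, w (q - 1)`, the index `v` may be placed at position `q` of a first-in-first-out
order: either it is the head of the fibre over `q`, or that fibre is empty and the predecessor of
`v` is the earliest index whose successor has not been placed. -/
structure IsQueueStep (f : Fin n → ℕ) (q : ℕ) (w : Fin q → Fin n) (v : Fin n) : Prop where
  ne : ∀ r, w r ≠ v
  eq_iff_of_head : ∀ i, IsFiberHead f i → (v = i ↔ f i = q)
  first_pending : ∀ k, FiberCovBy f k v →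
    ∃ r, w r = k ∧ ∀ s < r, ∀ i, FiberCovBy f (w s) i → i ∈ Set.range w

lemma isQueueStep_of_isFiberHead {q : ℕ} {w : Fin q → Fin n}
    (hw : ∀ r : Fin q, IsQueueStep f r (fun s => w (s.castLE r.2.le)) (w r)) {v : Fin n}
    (hv : IsFiberHead f v) (hfv : f v = q) : IsQueueStep f q w v where
  ne r hr := r.2.ne <| ((hw r).eq_iff_of_head v hv).1 hr |>.symm.trans hfv
  eq_iff_of_head _ hi := ⟨fun h => h ▸ hfv, fun h => hv.eq hi (hfv.trans h.symm)⟩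
  first_pending k hk := absurd hv (not_isFiberHead_iff.2 ⟨k, hk⟩)

/-- The parking condition provides an index that is due but not yet placed, and the least such
index has a predecessor, which is placed. -/
lemma exists_pending (hf : IsPF n f) {q : ℕ} (hq : q < n) (hfq : ∀ i, f i ≠ q)
    {w : Fin q → Fin n}
    (hw : ∀ r : Fin q, IsQueueStep f r (fun s => w (s.castLE r.2.le)) (w r)) :
    ∃ r i, FiberCovBy f (w r) i ∧ i ∉ Set.range w := by
  have hunplaced : ∃ i, i ∉ Set.range w ∧ f i ≤ q := by
    have hcard : #(univ.image w) ≤ q := card_image_le.trans_eq (by simp)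
    simpa using hf.exists_notMem_le hq hcard
  obtain ⟨i, ⟨hiw, hiq⟩, hmin⟩ :=
    WellFounded.has_min (wellFounded_lt (α := Fin n)) {i | i ∉ Set.range w ∧ f i ≤ q} hunplaced
  have hhead : ¬ IsFiberHead f i := fun hhead =>
    hiw ⟨⟨f i, hiq.lt_of_ne (hfq i)⟩, ((hw _).eq_iff_of_head i hhead).2 rfl⟩
  obtain ⟨k, hk⟩ := not_isFiberHead_iff.1 hhead
  obtain ⟨r, rfl⟩ : k ∈ Set.range w := by
    by_contra hkw
    exact hmin k ⟨hkw, hk.2.1 ▸ hiq⟩ hk.1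
  exact ⟨r, i, hk, hiw⟩

lemma exists_isQueueStep (hf : IsPF n f) {q : ℕ} (hq : q < n) {w : Fin q → Fin n}
    (hw : ∀ r : Fin q, IsQueueStep f r (fun s => w (s.castLE r.2.le)) (w r)) :
    ∃ v, IsQueueStep f q w v := by
  by_cases hfib : ∃ i, f i = q
  · obtain ⟨i, hi⟩ := hfib
    obtain ⟨v, hv, hvi⟩ := exists_isFiberHead f i
    exact ⟨v, isQueueStep_of_isFiberHead hw hv (hvi.trans hi)⟩
  push Not at hfib
  obtain ⟨r, ⟨v, hv, hvw⟩, hmin⟩ := WellFounded.has_min (wellFounded_lt (α := Fin q))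
    {r | ∃ i, FiberCovBy f (w r) i ∧ i ∉ Set.range w} (exists_pending hf hq hfib hw)
  refine ⟨v, fun r hr => hvw ⟨r, hr⟩, fun i hi => ?_, fun k hk => ?_⟩
  · refine iff_of_false ?_ (hfib i)
    rintro rfl
    exact not_isFiberHead_iff.2 ⟨_, hv⟩ hi
  · refine ⟨r, hv.left_unique hk, fun s hs i hi => ?_⟩
    by_contra hiw
    exact hmin s ⟨i, hi, hiw⟩ hs

theorem IsPF.exists_isFIFO (hf : IsPF n f) : ∃ p, IsFIFO f p := by
  obtain ⟨w, hw⟩ := exists_fin_seq_of_forall_exists_next (IsQueueStep f) n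
    fun q hq _ hw => exists_isQueueStep hf hq hw
  have hinj : Injective w := Injective.of_lt_imp_ne fun q r hqr => (hw r).ne ⟨q, hqr⟩
  have hbij : Bijective w := Finite.injective_iff_bijective.1 hinj
  obtain ⟨σ, rfl⟩ : ∃ σ : Equiv.Perm (Fin n), ⇑σ.symm = w :=
    ⟨(Equiv.ofBijective w hbij).symm, rfl⟩
  refine ⟨fun i => σ i, Fin.val_injective.comp σ.injective, fun i => by simp, ?_, ?_, ?_⟩
  · intro i hi
    exact ((hw (σ i)).eq_iff_of_head i hi).1 (σ.symm_apply_apply i)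
  · intro k l hkl
    obtain ⟨r, hr, -⟩ := (hw (σ l)).first_pending k (by rwa [σ.symm_apply_apply])
    rw [← hr, σ.apply_symm_apply]
    exact r.2
  · intro k l k' l' hkl hkl' hlt
    obtain ⟨r, hr, hplaced⟩ := (hw (σ l')).first_pending k' (by rwa [σ.symm_apply_apply])
    rw [← hr, σ.apply_symm_apply] at hlt
    obtain ⟨s, rfl⟩ := hplaced ⟨σ k, hlt.trans r.2⟩ hlt l (by simpa using hkl)
    rw [σ.apply_symm_apply]
    exact s.2

end Queue

/-! ### Arcs and the label of a point -/

section DescRank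

variable {ι α : Type*} [Fintype ι] [LinearOrder α]

/-- The position of `i`, counted from `0`, when the entries of `x` are listed in decreasing
order. -/
def descRank (x : ι → α) (i : ι) : ℕ := #{k | x i < x k}

variable {x y : ι → α} {i j : ι}

lemma descRank_le_descRank_iff : descRank x i ≤ descRank x j ↔ x j ≤ x i := by
  refine ⟨fun h => ?_, fun h => card_le_card (monotone_filter_right _ fun k _ hk => h.trans_lt hk)⟩
  by_contra! hlt
  refine h.not_gt (card_lt_card (ssubset_iff_of_subset ?_ |>.2 ⟨j, by simpa using hlt, by simp⟩))
  exact monotone_filter_right _ fun k _ hk => hlt.trans hk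

lemma descRank_lt_descRank_iff : descRank x i < descRank x j ↔ x j < x i :=
  lt_iff_lt_of_le_iff_le descRank_le_descRank_iff

lemma descRank_injective_iff : Injective (descRank x) ↔ Injective x := by
  simp only [Injective, le_antisymm_iff, descRank_le_descRank_iff, and_comm]

lemma descRank_lt_card (x : ι → α) (i : ι) : descRank x i < Fintype.card ι :=
  card_lt_univ_of_notMem (x := i) (by simp)

lemma descRank_eq_descRank_iff : descRank x = descRank y ↔ ∀ i j, x i < x j ↔ y i < y j where
  mp h i j := by rw [← descRank_lt_descRank_iff, h, descRank_lt_descRank_iff]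
  mpr h := funext fun i => by simp only [descRank, h]

lemma descRank_eq_of_injective {p : ι → ℕ} (hp : Injective p) (hlt : ∀ i, p i < Fintype.card ι)
    (h : ∀ i j, x i < x j ↔ p j < p i) : descRank x = p := funext fun i => by
  simpa only [descRank, h] using card_filter_lt_of_injective hp hlt (hlt i).le

end DescRank

section Arc

variable {ι : Type*} [LT ι] {x : ι → ℝ} {i j k k' l l' : ι}

/-- The pairs `(i, j)` such that `x` lies in the strip `0 < x i - x j < 1` of the Shi
arrangement. -/
def ShiArc (x : ι → ℝ) (i j : ι) : Prop := i < j ∧ x j < x i ∧ x i - x j < 1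

/-- The arc `(k, l)` of `x` is maximal under containment, when an arc `(i, j)` is viewed as the
interval from `x j` to `x i`. -/
def IsMaxShiArc (x : ι → ℝ) (k l : ι) : Prop :=
  ShiArc x k l ∧ ∀ i j, ShiArc x i j → x k ≤ x i → x j ≤ x l → i = k ∧ j = l

lemma biUnique_isMaxShiArc (x : ι → ℝ) : Relator.BiUnique (IsMaxShiArc x) := by
  constructor
  · intro k k' l h h'
    rcases le_total (x k) (x k') with hk | hk
    · exact (h.2 _ _ h'.1 hk le_rfl).1.symm
    · exact (h'.2 _ _ h.1 hk le_rfl).1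
  · intro k l l' h h'
    rcases le_total (x l) (x l') with hl | hl
    · exact (h'.2 _ _ h.1 le_rfl hl).2
    · exact (h.2 _ _ h'.1 le_rfl hl).2.symm

lemma IsMaxShiArc.lt_of_lt (h : IsMaxShiArc x k l) (h' : IsMaxShiArc x k' l') (hk : x k' < x k) :
    x l' < x l := by
  by_contra! hl
  exact hk.ne' (congrArg x (h'.2 _ _ h.1 hk.le hl).1)

lemma ShiArc.exists_isMaxShiArc [Finite ι] (hx : Injective x) (h : ShiArc x i j) :
    ∃ k l, IsMaxShiArc x k l ∧ x i ≤ x k ∧ x l ≤ x j := by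
  obtain ⟨⟨k, l⟩, ⟨hkl, hik, hlj⟩, hmax⟩ :=
    Set.exists_max_image {a : ι × ι | ShiArc x a.1 a.2 ∧ x i ≤ x a.1 ∧ x a.2 ≤ x j}
      (fun a => x a.1 - x a.2) (Set.toFinite _) ⟨(i, j), h, le_rfl, le_rfl⟩
  refine ⟨k, l, ⟨hkl, fun i' j' harc hki' hj'l => ?_⟩, hik, hlj⟩
  have hlen : x i' - x j' ≤ x k - x l :=
    hmax (i', j') ⟨harc, hik.trans hki', hj'l.trans hlj⟩
  exact ⟨hx (by linarith), hx (by linarith)⟩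

end Arc

section Label

instance {ι : Type*} [Finite ι] [Preorder ι] (x : ι → ℝ) : IsWellFounded ι (IsMaxShiArc x) :=
  ⟨Subrelation.wf (fun h => h.1.1) wellFounded_lt⟩

variable {ι : Type*} [Fintype ι] [LinearOrder ι] {x y : ι → ℝ} {f : ι → ℕ} {i j k l a b : ι}

/-- The Athanasiadis–Linusson label of the point `x`: the maximal arcs link the indices into chains,
and all indices of a chain receive the position of its head in the decreasing order of `x`. -/
noncomputable def shiLabel (x : ι → ℝ) (i : ι) : ℕ := descRank x (chainHead (IsMaxShiArc x) i)

lemma shiLabel_eq_of_isMaxShiArc (h : IsMaxShiArc x k l) : shiLabel x l = shiLabel x k :=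
  congrArg (descRank x) (chainHead_eq_of_rel (biUnique_isMaxShiArc x).1 h)

lemma shiLabel_eq_descRank (h : ∀ k, ¬ IsMaxShiArc x k i) : shiLabel x i = descRank x i :=
  congrArg (descRank x) (chainHead_eq_self h)

lemma fiberCovBy_shiLabel_iff (hx : Injective x) :
    FiberCovBy (shiLabel x) k l ↔ IsMaxShiArc x k l :=
  (fiberCovBy_comp_iff (descRank_injective_iff.2 hx)).trans
    (fiberCovBy_chainHead_iff (biUnique_isMaxShiArc x) fun _ _ h => h.1.1)

lemma isFIFO_shiLabel (hx : Injective x) : IsFIFO (shiLabel x) (descRank x) where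
  injective := descRank_injective_iff.2 hx
  lt_card := descRank_lt_card x
  head_eq _ hi := shiLabel_eq_descRank fun k hk =>
    not_isFiberHead_iff.2 ⟨k, (fiberCovBy_shiLabel_iff hx).2 hk⟩ hi
  lt_of_fiberCovBy _ _ h :=
    descRank_lt_descRank_iff.2 ((fiberCovBy_shiLabel_iff hx).1 h).1.2.1
  lt_of_lt _ _ _ _ h h' hlt := descRank_lt_descRank_iff.2 <|
    ((fiberCovBy_shiLabel_iff hx).1 h).lt_of_lt ((fiberCovBy_shiLabel_iff hx).1 h')
      (descRank_lt_descRank_iff.1 hlt)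

lemma shiLabel_eq_of_fiberCovBy_iff (hf : IsFIFO f (descRank x))
    (h : ∀ k l, FiberCovBy f k l ↔ IsMaxShiArc x k l) : shiLabel x = f := by
  funext i
  induction i using WellFoundedLT.induction with
  | ind i ih =>
    by_cases hi : IsFiberHead f i
    · rw [hf.head_eq i hi]
      exact shiLabel_eq_descRank fun k hk => not_isFiberHead_iff.2 ⟨k, (h k i).2 hk⟩ hi
    · obtain ⟨k, hk⟩ := not_isFiberHead_iff.1 hi
      rw [shiLabel_eq_of_isMaxShiArc ((h k i).1 hk), ih k hk.1, hk.2.1]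

lemma shiArc_iff_exists_fiberCovBy (hx : Injective x) : ShiArc x i j ↔
    i < j ∧ descRank x i < descRank x j ∧ ∃ k l, FiberCovBy (shiLabel x) k l ∧
      descRank x k ≤ descRank x i ∧ descRank x j ≤ descRank x l := by
  simp only [descRank_lt_descRank_iff, descRank_le_descRank_iff, fiberCovBy_shiLabel_iff hx]
  constructor
  · exact fun h => ⟨h.1, h.2.1, h.exists_isMaxShiArc hx⟩
  · rintro ⟨hij, hlt, k, l, hkl, hik, hlj⟩
    exact ⟨hij, hlt, by linarith [hkl.1.2.2]⟩

lemma isMaxShiArc_congr (hrank : descRank x = descRank y) (harc : ShiArc x = ShiArc y) :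
    IsMaxShiArc x = IsMaxShiArc y := by
  have hle (i j : ι) : x i ≤ x j ↔ y i ≤ y j := by
    rw [← descRank_le_descRank_iff, hrank, descRank_le_descRank_iff]
  funext k l
  simp only [IsMaxShiArc, harc, hle]

theorem shiLabel_eq_shiLabel_iff (hx : Injective x) (hy : Injective y) :
    shiLabel x = shiLabel y ↔ descRank x = descRank y ∧ ShiArc x = ShiArc y := by
  constructor
  · intro h
    have hrank : descRank x = descRank y := (isFIFO_shiLabel hx).unique (h ▸ isFIFO_shiLabel hy)
    refine ⟨hrank, funext₂ fun i j => propext ?_⟩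
    rw [shiArc_iff_exists_fiberCovBy hx, shiArc_iff_exists_fiberCovBy hy, h, hrank]
  · rintro ⟨hrank, harc⟩
    funext i
    simp only [shiLabel, isMaxShiArc_congr hrank harc, hrank]

/-- The only possible predecessor of `b` is `a`, which is the head of its chain. -/
lemma shiLabel_lt_iff_of_covBy (ha : IsBot a) (hab : a ⋖ b) :
    shiLabel x b < shiLabel x a ↔ x a - x b < 0 := by
  have hla : shiLabel x a = descRank x a :=
    shiLabel_eq_descRank fun k hk => (ha k).not_gt hk.1.1
  by_cases h : IsMaxShiArc x a b
  · exact iff_of_false (shiLabel_eq_of_isMaxShiArc h).not_lt (by linarith [h.1.2.1])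
  · have hlb : shiLabel x b = descRank x b := shiLabel_eq_descRank fun k hk => by
      obtain rfl : k = a := le_antisymm (hab.le_of_lt hk.1.1) (ha k)
      exact h hk
    rw [hla, hlb, descRank_lt_descRank_iff, sub_neg]

end Label

/-! ### Realizing a parking function -/

section UnitSequence

variable {S : ℕ → ℕ → Prop}

lemma exists_next_sub_lt_one_iff (hS : ∀ q q' p' p, q ≤ q' → p' ≤ p → S q p → S q' p') {m : ℕ}
    {t : Fin m → ℝ} (hmono : StrictMono t) (ht : ∀ q p : Fin m, q < p → S q p → t p - t q < 1) :
    ∃ τ, ∀ q, t q < τ ∧ τ - t q ≠ 1 ∧ (τ - t q < 1 ↔ S q m) := by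
  classical
  have hbetween : ∀ a ∈ univ.image t ∪ ({q | ¬ S q m} : Finset (Fin m)).image fun q => t q + 1,
      ∀ b ∈ ({q | S q m} : Finset (Fin m)).image fun q => t q + 1, a < b := by
    simp only [mem_union, mem_image, mem_filter_univ, mem_univ, true_and]
    rintro _ (⟨r, rfl⟩ | ⟨r, hr, rfl⟩) _ ⟨q, hq, rfl⟩
    · rcases lt_or_ge q r with hqr | hrq
      · linarith [ht q r hqr (hS q q r m le_rfl r.2.le hq)]
      · linarith [hmono.monotone hrq]
    · have hrq : r < q := not_le.1 fun hqr => hr (hS q r m m hqr le_rfl hq)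
      linarith [hmono hrq]
  obtain ⟨τ, hlo, hhi⟩ := Order.exists_between_finsets _ _ hbetween
  refine ⟨τ, fun q => ⟨hlo _ (by simp), ?_⟩⟩
  by_cases hq : S q m
  · have hτ : τ < t q + 1 := hhi _ (mem_image_of_mem _ (by simpa using hq))
    exact ⟨by linarith, iff_of_true (by linarith) hq⟩
  · have hτ : t q + 1 < τ := hlo _ (mem_union_right _ (mem_image_of_mem _ (by simpa using hq)))
    exact ⟨by linarith, iff_of_false (by linarith) hq⟩

lemma exists_strictMono_sub_lt_one_iff (hS : ∀ q q' p' p, q ≤ q' → p' ≤ p → S q p → S q' p')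
    (m : ℕ) : ∃ t : Fin m → ℝ, StrictMono t ∧
      ∀ q p : Fin m, q < p → t p - t q ≠ 1 ∧ (t p - t q < 1 ↔ S q p) := by
  obtain ⟨t, ht⟩ := exists_fin_seq_of_forall_exists_next
    (fun p (t : Fin p → ℝ) τ => ∀ q, t q < τ ∧ τ - t q ≠ 1 ∧ (τ - t q < 1 ↔ S q p)) m
    fun p _ t ht => exists_next_sub_lt_one_iff hS (fun q r hqr => (ht r ⟨q, hqr⟩).1)
      fun q r hqr => (ht r ⟨q, hqr⟩).2.2.2
  exact ⟨t, fun q p hqp => (ht p ⟨q, hqp⟩).1, fun q p hqp => (ht p ⟨q, hqp⟩).2⟩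

end UnitSequence

namespace IsFIFO

variable {ι : Type*} [Fintype ι] [LinearOrder ι] {f p : ι → ℕ} {x : ι → ℝ}

lemma exists_point (hp : IsFIFO f p) : ∃ x : ι → ℝ, descRank x = p ∧ (∀ i j, x i - x j ≠ 1) ∧
    ∀ i j, ShiArc x i j ↔
      i < j ∧ p i < p j ∧ ∃ k l, FiberCovBy f k l ∧ p k ≤ p i ∧ p j ≤ p l := by
  obtain ⟨t, hmono, ht⟩ := exists_strictMono_sub_lt_one_iff
    (S := fun q r => ∃ k l, FiberCovBy f k l ∧ p k ≤ q ∧ r ≤ p l)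
    (fun _ _ _ _ hq hr ⟨k, l, hkl, hk, hl⟩ => ⟨k, l, hkl, hk.trans hq, hr.trans hl⟩)
    (Fintype.card ι)
  let position (i : ι) : Fin (Fintype.card ι) := ⟨p i, hp.lt_card i⟩
  have hlt (i j : ι) : -t (position i) < -t (position j) ↔ p j < p i :=
    neg_lt_neg_iff.trans hmono.lt_iff_lt
  refine ⟨fun i => -t (position i), descRank_eq_of_injective hp.injective hp.lt_card hlt,
    fun i j hij => ?_, fun i j => ?_⟩
  · have hpij : p i < p j := (hlt j i).1 (by linarith)
    exact (ht (position i) (position j) hpij).1 (by linarith)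
  · refine and_congr_right fun _ => (and_congr_left' (hlt j i)).trans ?_
    refine and_congr_right fun hpij => ?_
    rw [← (ht (position i) (position j) hpij).2, neg_sub_neg]

/-- Pairs of consecutive elements of a fibre do not nest in a first-in-first-out order. -/
lemma fiberCovBy_iff_isMaxShiArc (hp : IsFIFO f (descRank x))
    (harc : ∀ i j, ShiArc x i j ↔ i < j ∧ descRank x i < descRank x j ∧
      ∃ k l, FiberCovBy f k l ∧ descRank x k ≤ descRank x i ∧ descRank x j ≤ descRank x l)
    (k l : ι) : FiberCovBy f k l ↔ IsMaxShiArc x k l := by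
  have hfiberArc {k l : ι} (h : FiberCovBy f k l) : ShiArc x k l :=
    (harc k l).2 ⟨h.1, hp.lt_of_fiberCovBy k l h, k, l, h, le_rfl, le_rfl⟩
  constructor
  · refine fun h => ⟨hfiberArc h, fun i j hij hki hjl => ?_⟩
    rw [← descRank_le_descRank_iff] at hki hjl
    obtain ⟨-, -, k', l', h', hk'i, hjl'⟩ := (harc i j).1 hij
    obtain rfl : k' = k := by
      refine hp.injective ((hk'i.trans hki).eq_of_not_lt fun hlt => ?_)
      exact (hp.lt_of_lt k' l' k l h' h hlt).not_ge (hjl.trans hjl')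
    obtain rfl := h'.right_unique h
    exact ⟨hp.injective (hki.antisymm hk'i), hp.injective (hjl'.antisymm hjl)⟩
  · intro h
    obtain ⟨-, -, k', l', h', hk, hl⟩ := (harc k l).1 h.1
    obtain ⟨rfl, rfl⟩ := h.2 k' l' (hfiberArc h') (descRank_le_descRank_iff.1 hk)
      (descRank_le_descRank_iff.1 hl)
    exact h'

theorem exists_shiLabel_eq (hp : IsFIFO f p) :
    ∃ x : ι → ℝ, Injective x ∧ (∀ i j, x i - x j ≠ 1) ∧ shiLabel x = f := by
  obtain ⟨x, rfl, hne, harc⟩ := hp.exists_point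
  exact ⟨x, descRank_injective_iff.1 hp.injective, hne,
    shiLabel_eq_of_fiberCovBy_iff hp (hp.fiberCovBy_iff_isMaxShiArc harc)⟩

end IsFIFO

/-! ### Regions of the Shi arrangement -/

section Region

variable {n : ℕ} {x y : Fin n → ℝ}

/-- The linear form `x i - x j` of the Shi hyperplanes indexed by `((i, j), c)`, where `i < j` and
`c ∈ {0, 1}`. -/
def shiForm (n : ℕ) (k : {p : Fin n × Fin n // p.1 < p.2} × Fin 2) : (Fin n → ℝ) →L[ℝ] ℝ :=
  .proj k.1.1.1 - .proj k.1.1.2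

lemma shiComp_eq_arrangementCompl (n : ℕ) :
    shiComp n = arrangementCompl (shiForm n) fun k => (k.2 : ℕ) := by
  ext x
  simp [shiComp, arrangementCompl, shiForm, Prod.forall, Fin.forall_fin_two]

lemma injective_of_mem_shiComp (hx : x ∈ shiComp n) : Injective x :=
  .of_lt_imp_ne fun i j hij h => (hx i j hij).1 (sub_eq_zero.2 h)

lemma connectedComponentIn_shiComp_eq_iff_forall (hx : x ∈ shiComp n) (hy : y ∈ shiComp n) :
    connectedComponentIn (shiComp n) x = connectedComponentIn (shiComp n) y ↔
      ∀ i j, i < j → (x i - x j < 0 ↔ y i - y j < 0) ∧ (x i - x j < 1 ↔ y i - y j < 1) := by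
  rw [shiComp_eq_arrangementCompl] at hx hy ⊢
  rw [connectedComponentIn_arrangementCompl_eq_iff hx hy]
  simp [shiForm, Prod.forall, Fin.forall_fin_two]

lemma connectedComponentIn_shiComp_eq_iff (hx : x ∈ shiComp n) (hy : y ∈ shiComp n) :
    connectedComponentIn (shiComp n) x = connectedComponentIn (shiComp n) y ↔
      descRank x = descRank y ∧ ShiArc x = ShiArc y := by
  rw [connectedComponentIn_shiComp_eq_iff_forall hx hy, descRank_eq_descRank_iff]
  constructor
  · intro h
    have hlt (i j : Fin n) : x i < x j ↔ y i < y j := by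
      rcases lt_trichotomy i j with hij | rfl | hji
      · simpa only [sub_neg] using (h i j hij).1
      · simp only [lt_irrefl]
      · have hle : x j ≤ x i ↔ y j ≤ y i := by
          rw [((injective_of_mem_shiComp hx).ne hji.ne).le_iff_lt,
            ((injective_of_mem_shiComp hy).ne hji.ne).le_iff_lt]
          simpa only [sub_neg] using (h j i hji).1
        exact lt_iff_lt_of_le_iff_le hle
    refine ⟨hlt, funext₂ fun i j => propext (and_congr_right fun hij => ?_)⟩
    exact and_congr (hlt j i) (h i j hij).2
  · rintro ⟨hlt, harc⟩ i j hij
    refine ⟨by simpa only [sub_neg] using hlt i j, ?_⟩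
    by_cases hji : x j < x i
    · have hxy : ShiArc x i j ↔ ShiArc y i j := by rw [harc]
      simpa only [ShiArc, hij, hji, (hlt j i).1 hji, true_and] using hxy
    · have hyji : ¬ y j < y i := mt (hlt j i).2 hji
      exact iff_of_true (by linarith) (by linarith)

theorem shiLabel_eq_iff_connectedComponentIn_eq (hx : x ∈ shiComp n) (hy : y ∈ shiComp n) :
    shiLabel x = shiLabel y ↔
      connectedComponentIn (shiComp n) x = connectedComponentIn (shiComp n) y := by
  rw [connectedComponentIn_shiComp_eq_iff hx hy,
    shiLabel_eq_shiLabel_iff (injective_of_mem_shiComp hx) (injective_of_mem_shiComp hy)]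

theorem image_shiLabel_shiComp (n : ℕ) : shiLabel '' shiComp n = {f | IsPF n f} := by
  ext f
  constructor
  · rintro ⟨x, hx, rfl⟩
    exact (isFIFO_shiLabel (injective_of_mem_shiComp hx)).isPF
  · intro hf
    obtain ⟨p, hp⟩ := hf.exists_isFIFO
    obtain ⟨x, hx, hne, rfl⟩ := hp.exists_shiLabel_eq
    exact ⟨x, fun i j hij => ⟨sub_ne_zero.2 (hx.ne hij.ne), hne i j⟩, rfl⟩

lemma image_shiLabel_setOf_lt {a b : Fin n} (ha : IsBot a) (hab : a ⋖ b) :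
    shiLabel '' {x | x ∈ shiComp n ∧ x a - x b < 0} = {f | IsPF n f ∧ f b < f a} := by
  have hpre : {x | x ∈ shiComp n ∧ x a - x b < 0} = shiComp n ∩ shiLabel ⁻¹' {f | f b < f a} := by
    ext x
    exact and_congr_right fun _ => (shiLabel_lt_iff_of_covBy ha hab).symm
  rw [hpre, Set.image_inter_preimage, image_shiLabel_shiComp, Set.ofPred_and]

lemma image_connectedComponentIn_setOf_lt {i j : Fin n} (hij : i < j) :
    connectedComponentIn (shiComp n) '' {x | x ∈ shiComp n ∧ x i - x j < 0} =
      {R | IsShiRegion n R ∧ ∀ x ∈ R, x i - x j < 0} := by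
  ext R
  constructor
  · rintro ⟨x, ⟨hx, hxij⟩, rfl⟩
    refine ⟨⟨x, hx, rfl⟩, fun y hy => ?_⟩
    have hcomp := (connectedComponentIn_shiComp_eq_iff_forall hx
      (connectedComponentIn_subset _ _ hy)).1 (connectedComponentIn_eq hy)
    exact (hcomp i j hij).1.1 hxij
  · rintro ⟨⟨x, hx, rfl⟩, hneg⟩
    exact ⟨x, ⟨hx, hneg x (mem_connectedComponentIn hx)⟩, rfl⟩

end Region

/-- The number of parking functions of length `n` with `a_1 > a_2` equals the
number of Shi regions with `x_1 - x_2 < 0`. -/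
theorem gt_parking_eq_lt_regions (n : ℕ) (hn : 2 ≤ n) :
    Set.ncard {a : Fin n → ℕ | IsPF n a ∧ a ⟨1, by omega⟩ < a ⟨0, by omega⟩} =
      Set.ncard {R : Set (Fin n → ℝ) | IsShiRegion n R ∧
        ∀ x ∈ R, x ⟨0, by omega⟩ - x ⟨1, by omega⟩ < 0} := by
  have ha : IsBot (⟨0, by omega⟩ : Fin n) := fun i => Nat.zero_le i
  have hab : (⟨0, by omega⟩ : Fin n) ⋖ ⟨1, by omega⟩ := by simp [Fin.covBy_iff]
  rw [← image_shiLabel_setOf_lt ha hab, ← image_connectedComponentIn_setOf_lt hab.lt]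
  exact ncard_image_eq_ncard_image fun x hx y hy =>
    shiLabel_eq_iff_connectedComponentIn_eq hx.1 hy.1
end

section
/- For n ≥ 2, let gt_n, eq_n, lt_n be the numbers of parking functions a of length n with a_1 > a_2, a_1 = a_2, a_1 < a_2 respectively, and let p1 ≥ p2 ≥ p3 be these three numbers sorted in decreasing order. Let r1 ≥ r2 ≥ r3 be, sorted in decreasing order, the numbers of regions R of the Shi arrangement S_n satisfying respectively x_1 − x_2 < 0 for all x ∈ R, 0 < x_1 − x_2 < 1 for all x ∈ R, and x_1 − x_2 > 1 for all x ∈ R. Then the first triple majorises the second: p1 ≥ r1, p1 + p2 ≥ r1 + r2, and p1 + p2 + p3 = r1 + r2 + r3. -/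
/-!
Write `T = (n + 1) ^ (n - 1)` and `e = (n + 1) ^ (n - 2)`. By the cycle lemma, exactly one of the
`n + 1` rotations of a function `Fin n → ZMod (n + 1)` is a parking function; hence there are `T`
parking functions, of which `e` satisfy `a₁ = a₂`. Exchanging `a₁` and `a₂` shows that the three
parking numbers are `a, e, a` with `2 a + e = T`.

Regions of an arrangement are the sign vectors it realises, and these obey deletion–restriction:
adding the hyperplane `f = 0` adds one cell for every cell of the restriction to that hyperplane.
Deleting hyperplanes through `x₁` one at a time, always keeping a staircase of offsets, gives `T`
regions for the Shi arrangement and `e` cells on the wall `x₁ - x₂ = 1`. Without this wall the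
arrangement is invariant under exchanging `x₁` and `x₂`, so `T = 2 L + e`, where `L` counts the
regions in `x₁ < x₂`; thus `L = a`. Let `M` and `G` count the regions in the other two slabs. Every
cell on the wall extends to both of its sides, so `e ≤ M` and `e ≤ G`, while `M + G = a + e`. All
three region numbers therefore lie between `e` and `a`, and have the same sum as `a, e, a`.
-/

/-! ### Cells of an affine arrangement -/

section Cells

open SignType Topology

lemma ncard_image_eq_ncard_image_s11 {X Y Z : Type*} {S : Set X} {F : X → Y} {G : X → Z}
    (h : ∀ x ∈ S, ∀ y ∈ S, (F x = F y ↔ G x = G y)) : (F '' S).ncard = (G '' S).ncard := by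
  refine Set.ncard_congr (fun _ ha ↦ G ha.choose) (fun _ ha ↦ ⟨_, ha.choose_spec.1, rfl⟩) ?_ ?_
  · intro a b ha hb hab
    rwa [← h _ ha.choose_spec.1 _ hb.choose_spec.1, ha.choose_spec.2, hb.choose_spec.2] at hab
  · rintro _ ⟨x, hx, rfl⟩
    have hFx : F x ∈ F '' S := ⟨x, hx, rfl⟩
    exact ⟨F x, hFx, (h _ hFx.choose_spec.1 _ hx).1 hFx.choose_spec.2⟩

variable {E E' : Type*} [AddCommGroup E] [Module ℝ E] [AddCommGroup E'] [Module ℝ E']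
  {A : Set (E →ᵃ[ℝ] ℝ)} {B : Set (E' →ᵃ[ℝ] ℝ)} {W : Set E} {f : E →ᵃ[ℝ] ℝ} {x y : E}

/-- The complement of the arrangement of the hyperplanes `f = 0`, `f ∈ A`. An arrangement is
encoded throughout by a set of affine functions, which orients its hyperplanes. -/
def hyperplaneCompl (A : Set (E →ᵃ[ℝ] ℝ)) : Set E := {x | ∀ f ∈ A, f x ≠ 0}

/-- The sign vector of `x` with respect to the arrangement `A`. -/
noncomputable def signVector (A : Set (E →ᵃ[ℝ] ℝ)) (x : E) : A → SignType := fun f ↦ sign (f.1 x)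

/-- The cells of the arrangement `A` meeting `W` outside the hyperplanes, a cell being identified
with its sign vector. -/
def cells (A : Set (E →ᵃ[ℝ] ℝ)) (W : Set E) : Set (A → SignType) :=
  signVector A '' (W ∩ hyperplaneCompl A)

/-- The number of cells of the arrangement `A` in `W`. -/
noncomputable def cellCount (A : Set (E →ᵃ[ℝ] ℝ)) (W : Set E) : ℕ := (cells A W).ncard

lemma signVector_eq_iff :
    signVector A x = signVector A y ↔ ∀ f ∈ A, sign (f x) = sign (f y) := by
  simp only [signVector, funext_iff, Subtype.forall]

lemma pos_iff_of_signVector_eq (h : signVector A x = signVector A y) (hf : f ∈ A) :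
    0 < f x ↔ 0 < f y := by
  rw [← sign_eq_one_iff, signVector_eq_iff.1 h f hf, sign_eq_one_iff]

lemma neg_iff_of_signVector_eq (h : signVector A x = signVector A y) (hf : f ∈ A) :
    f x < 0 ↔ f y < 0 := by
  rw [← sign_eq_neg_one_iff, signVector_eq_iff.1 h f hf, sign_eq_neg_one_iff]

lemma mem_hyperplaneCompl_of_signVector_eq (h : signVector A x = signVector A y)
    (hx : x ∈ hyperplaneCompl A) : y ∈ hyperplaneCompl A := fun f hf ↦ by
  rw [← sign_ne_zero, ← signVector_eq_iff.1 h f hf, sign_ne_zero]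
  exact hx f hf

lemma finite_cells (hA : A.Finite) (W : Set E) : (cells A W).Finite :=
  have := hA.to_subtype
  Set.toFinite _

lemma cells_union (A : Set (E →ᵃ[ℝ] ℝ)) (W W' : Set E) :
    cells A (W ∪ W') = cells A W ∪ cells A W' := by
  rw [cells, Set.union_inter_distrib_right, Set.image_union, cells, cells]

/-- Up to orientation, `B` is the pullback of `A` under the parametrisation `T` of `T '' W'`, where
pullbacks without zeros on `W'` may be dropped. -/
lemma cellCount_image {W' : Set E'} (T : E' → E)
    (hAB : ∀ f ∈ A, (∃ g ∈ B, Set.EqOn (f ∘ T) g W' ∨ Set.EqOn (f ∘ T) (-g) W') ∨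
      ∃ s : SignType, s ≠ 0 ∧ ∀ x ∈ W', sign (f (T x)) = s)
    (hBA : ∀ g ∈ B, ∃ f ∈ A, Set.EqOn (f ∘ T) g W' ∨ Set.EqOn (f ∘ T) (-g) W') :
    cellCount A (T '' W') = cellCount B W' := by
  have zero_iff {f : E →ᵃ[ℝ] ℝ} {g : E' →ᵃ[ℝ] ℝ} {x : E'} (hx : x ∈ W')
      (h : Set.EqOn (f ∘ T) g W' ∨ Set.EqOn (f ∘ T) (-g) W') : f (T x) = 0 ↔ g x = 0 := by
    rcases h with h | h <;> have := h hx <;> simp_all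
  have sign_iff {f : E →ᵃ[ℝ] ℝ} {g : E' →ᵃ[ℝ] ℝ} {x y : E'} (hx : x ∈ W') (hy : y ∈ W')
      (h : Set.EqOn (f ∘ T) g W' ∨ Set.EqOn (f ∘ T) (-g) W') :
      sign (f (T x)) = sign (f (T y)) ↔ sign (g x) = sign (g y) := by
    rcases h with h | h <;> have := h hx <;> have := h hy <;> simp_all [Left.sign_neg]
  have generic_iff : ∀ x ∈ W', T x ∈ hyperplaneCompl A ↔ x ∈ hyperplaneCompl B := by
    refine fun x hx ↦ ⟨fun h g hg ↦ ?_, fun h f hf ↦ ?_⟩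
    · obtain ⟨f, hf, hfg⟩ := hBA g hg
      exact (zero_iff hx hfg).not.1 (h f hf)
    · obtain ⟨g, hg, hfg⟩ | ⟨s, hs, hfs⟩ := hAB f hf
      · exact (zero_iff hx hfg).not.2 (h g hg)
      · exact sign_ne_zero.1 (hfs x hx ▸ hs)
  have image_eq : T '' W' ∩ hyperplaneCompl A = T '' (W' ∩ hyperplaneCompl B) := by
    rw [← Set.image_inter_preimage]
    exact congrArg (T '' ·) (Set.ext fun x ↦ and_congr_right (generic_iff x))
  rw [cellCount, cells, image_eq, Set.image_image]
  refine ncard_image_eq_ncard_image_s11 fun x hx y hy ↦ ?_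
  rw [signVector_eq_iff, signVector_eq_iff]
  refine ⟨fun h g hg ↦ ?_, fun h f hf ↦ ?_⟩
  · obtain ⟨f, hf, hfg⟩ := hBA g hg
    exact (sign_iff hx.1 hy.1 hfg).1 (h f hf)
  · obtain ⟨g, hg, hfg⟩ | ⟨s, -, hfs⟩ := hAB f hf
    · exact (sign_iff hx.1 hy.1 hfg).2 (h g hg)
    · rw [hfs x hx.1, hfs y hy.1]

lemma cellCount_insert_of_sign_eq {s : SignType} (hs : s ≠ 0) (h : ∀ x ∈ W, sign (f x) = s) :
    cellCount (insert f A) W = cellCount A W := by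
  rw [← cellCount_image (A := insert f A) (B := A) (W' := W) id, Set.image_id]
  · rintro g (rfl | hg)
    · exact Or.inr ⟨s, hs, h⟩
    · exact Or.inl ⟨g, hg, Or.inl fun _ _ ↦ rfl⟩
  · exact fun g hg ↦ ⟨g, Set.mem_insert_of_mem _ hg, Or.inl fun _ _ ↦ rfl⟩

lemma cellCount_insert_of_pos (h : ∀ x ∈ W, 0 < f x) :
    cellCount (insert f A) W = cellCount A W :=
  cellCount_insert_of_sign_eq one_ne_zero fun x hx ↦ sign_eq_one_iff.2 (h x hx)

lemma cellCount_insert_of_neg (h : ∀ x ∈ W, f x < 0) :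
    cellCount (insert f A) W = cellCount A W :=
  cellCount_insert_of_sign_eq (by decide) fun x hx ↦ sign_eq_neg_one_iff.2 (h x hx)

lemma cellCount_eq_add_of_mem (hA : A.Finite) (hf : f ∈ A) (W : Set E) :
    cellCount A W = cellCount A (W ∩ {x | 0 < f x}) + cellCount A (W ∩ {x | f x < 0}) := by
  have hsplit : cells A W = cells A (W ∩ {x | 0 < f x} ∪ W ∩ {x | f x < 0}) := by
    rw [← Set.inter_union_distrib_left]
    refine congrArg (signVector A '' ·) (Set.ext fun x ↦ ?_)
    have hx : x ∈ hyperplaneCompl A → f x < 0 ∨ 0 < f x := fun hx ↦ (hx f hf).lt_or_gt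
    simp only [Set.mem_inter_iff, Set.mem_union, Set.mem_ofPred_eq]
    tauto
  have hdisj : Disjoint (cells A (W ∩ {x | 0 < f x})) (cells A (W ∩ {x | f x < 0})) := by
    rw [Set.disjoint_left]
    rintro _ ⟨x, ⟨⟨-, hx⟩, -⟩, rfl⟩ ⟨y, ⟨⟨-, hy⟩, -⟩, hyx⟩
    exact lt_asymm hy ((pos_iff_of_signVector_eq hyx hf).2 hx)
  rw [cellCount, hsplit, cells_union, Set.ncard_union_eq hdisj (finite_cells hA _)
    (finite_cells hA _), cellCount, cellCount]

lemma cellCount_insert_eq_add (hA : A.Finite) (f : E →ᵃ[ℝ] ℝ) :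
    cellCount (insert f A) Set.univ =
      cellCount A {x | 0 < f x} + cellCount A {x | f x < 0} := by
  rw [cellCount_eq_add_of_mem (hA.insert f) (Set.mem_insert f A), Set.univ_inter, Set.univ_inter,
    cellCount_insert_of_pos (W := {x | 0 < f x}) fun _ hx ↦ hx,
    cellCount_insert_of_neg (W := {x | f x < 0}) fun _ hx ↦ hx]

lemma convex_signVector_preimage (σ : A → SignType) : Convex ℝ {x | signVector A x = σ} := by
  have h : {x | signVector A x = σ} = ⋂ f : A, f.1 ⁻¹' (sign ⁻¹' {σ f}) := by
    ext x
    simp only [signVector, funext_iff, Set.mem_iInter, Set.mem_preimage, Set.mem_ofPred_eq,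
      Set.mem_singleton_iff]
  rw [h]
  exact convex_iInter fun f ↦
    (Set.ordConnected_singleton.preimage_mono sign.monotone).convex.affine_preimage f.1

/-- Move a little from `x` in a direction `v` that increases `f`, forwards or backwards. -/
lemma exists_pos_exists_neg_of_eq_zero (hA : A.Finite) (hf : f.linear ≠ 0)
    (hx : x ∈ hyperplaneCompl A) (hfx : f x = 0) :
    (∃ y, 0 < f y ∧ signVector A y = signVector A x) ∧
      ∃ y, f y < 0 ∧ signVector A y = signVector A x := by
  obtain ⟨v, hv⟩ := LinearMap.surjective hf 1
  have apply_line (g : E →ᵃ[ℝ] ℝ) (t : ℝ) : g (t • v +ᵥ x) = t * g.linear v + g x := by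
    rw [AffineMap.map_vadd, map_smul, smul_eq_mul, vadd_eq_add]
  have hf_line (t : ℝ) : f (t • v +ᵥ x) = t := by rw [apply_line, hv, hfx, mul_one, add_zero]
  have hsame : ∀ᶠ t in 𝓝 (0 : ℝ), signVector A (t • v +ᵥ x) = signVector A x := by
    simp only [signVector_eq_iff, Filter.eventually_all_finite hA]
    intro g hg
    have hcont : ContinuousAt (fun t : ℝ ↦ sign (g (t • v +ᵥ x))) 0 := by
      refine ContinuousAt.comp (g := sign) ?_ (by simp only [apply_line]; fun_prop)
      exact continuousAt_sign_of_ne_zero (by simpa using hx g hg)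
    have htendsto := hcont.tendsto
    rw [nhds_discrete SignType, Filter.tendsto_pure, zero_smul, zero_vadd] at htendsto
    exact htendsto
  obtain ⟨t, ht, htpos⟩ := ((hsame.filter_mono nhdsWithin_le_nhds).and
    (self_mem_nhdsWithin (s := Set.Ioi 0))).exists
  obtain ⟨u, hu, huneg⟩ := ((hsame.filter_mono nhdsWithin_le_nhds).and
    (self_mem_nhdsWithin (s := Set.Iio 0))).exists
  exact ⟨⟨_, (hf_line t).symm ▸ htpos, ht⟩, ⟨_, (hf_line u).symm ▸ huneg, hu⟩⟩

lemma exists_eq_zero_of_pos_of_neg (hx : 0 < f x) (hy : f y < 0)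
    (hxy : signVector A y = signVector A x) : ∃ z, f z = 0 ∧ signVector A z = signVector A x := by
  have hzero : (0 : ℝ) ∈ f '' segment ℝ y x := by
    rw [image_segment, segment_eq_Icc (hy.trans hx).le]
    exact ⟨hy.le, hx.le⟩
  obtain ⟨z, hz, hfz⟩ := hzero
  exact ⟨z, hfz, (convex_signVector_preimage (signVector A x)).segment_subset hxy rfl hz⟩

lemma cells_pos_inter_cells_neg (hA : A.Finite) (hf : f.linear ≠ 0) :
    cells A {x | 0 < f x} ∩ cells A {x | f x < 0} = cells A {x | f x = 0} := by
  ext σ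
  constructor
  · rintro ⟨⟨x, ⟨hfx, hx⟩, rfl⟩, ⟨y, ⟨hfy, -⟩, hyx⟩⟩
    obtain ⟨z, hfz, hzx⟩ := exists_eq_zero_of_pos_of_neg hfx hfy hyx
    exact ⟨z, ⟨hfz, mem_hyperplaneCompl_of_signVector_eq hzx.symm hx⟩, hzx⟩
  · rintro ⟨x, ⟨hfx, hx⟩, rfl⟩
    obtain ⟨⟨y, hfy, hyx⟩, ⟨z, hfz, hzx⟩⟩ := exists_pos_exists_neg_of_eq_zero hA hf hx hfx
    exact ⟨⟨y, ⟨hfy, mem_hyperplaneCompl_of_signVector_eq hyx.symm hx⟩, hyx⟩,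
      ⟨z, ⟨hfz, mem_hyperplaneCompl_of_signVector_eq hzx.symm hx⟩, hzx⟩⟩

lemma cellCount_eq_zero_le_pos (hA : A.Finite) (hf : f.linear ≠ 0) :
    cellCount A {x | f x = 0} ≤ cellCount A {x | 0 < f x} := by
  rw [cellCount, ← cells_pos_inter_cells_neg hA hf]
  exact Set.ncard_le_ncard Set.inter_subset_left (finite_cells hA _)

lemma cellCount_eq_zero_le_neg_of_pos_on_wall {g : E →ᵃ[ℝ] ℝ} (hA : A.Finite) (hf : f.linear ≠ 0)
    (hg : g ∈ A) (hpos : ∀ x, f x = 0 → 0 < g x) :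
    cellCount A {x | f x = 0} ≤ cellCount A {x | 0 < g x ∧ f x < 0} := by
  refine Set.ncard_le_ncard ?_ (finite_cells hA _)
  rintro _ ⟨x, ⟨hfx, hx⟩, rfl⟩
  obtain ⟨-, y, hfy, hyx⟩ := exists_pos_exists_neg_of_eq_zero hA hf hx hfx
  exact ⟨y, ⟨⟨(pos_iff_of_signVector_eq hyx hg).2 (hpos x hfx), hfy⟩,
    mem_hyperplaneCompl_of_signVector_eq hyx.symm hx⟩, hyx⟩

/-- Deletion–restriction: the cells of `A` that `f = 0` cuts in two are those it meets. -/
theorem cellCount_insert (hA : A.Finite) (hf : f.linear ≠ 0) :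
    cellCount (insert f A) Set.univ = cellCount A Set.univ + cellCount A {x | f x = 0} := by
  have hinter := cells_pos_inter_cells_neg hA hf
  have hunion : cells A {x | 0 < f x} ∪ cells A {x | f x < 0} = cells A Set.univ := by
    have huniv : (Set.univ : Set E) = {x | 0 < f x} ∪ {x | f x < 0} ∪ {x | f x = 0} := by
      ext x
      have := lt_trichotomy (f x) 0
      simp only [Set.mem_univ, Set.mem_union, Set.mem_ofPred_eq, true_iff]
      tauto
    rw [huniv, cells_union, cells_union, ← hinter]
    exact (Set.union_eq_left.2 (Set.inter_subset_left.trans Set.subset_union_left)).symm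
  rw [cellCount_insert_eq_add hA, cellCount, cellCount, cellCount, cellCount, ← hunion, ← hinter,
    Set.ncard_union_add_ncard_inter _ _ (finite_cells hA _) (finite_cells hA _)]

/-- Signs are constant on connected sets, and cells are convex. -/
lemma connectedComponentIn_hyperplaneCompl [TopologicalSpace E] [ContinuousAdd E]
    [ContinuousSMul ℝ E] (hA : ∀ f ∈ A, Continuous f) (hx : x ∈ hyperplaneCompl A) :
    connectedComponentIn (hyperplaneCompl A) x = {y | signVector A y = signVector A x} := by
  refine subset_antisymm (fun y hy ↦ signVector_eq_iff.2 fun f hf ↦ ?_) ?_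
  · have hcont : ContinuousOn (fun z ↦ sign (f z)) (connectedComponentIn (hyperplaneCompl A) x) :=
      fun z hz ↦ ((continuousAt_sign_of_ne_zero
        (connectedComponentIn_subset _ _ hz f hf)).comp (hA f hf).continuousAt).continuousWithinAt
    exact isPreconnected_connectedComponentIn.constant hcont hy (mem_connectedComponentIn hx)
  · exact (convex_signVector_preimage _).isPreconnected.subset_connectedComponentIn rfl
      fun y hy ↦ mem_hyperplaneCompl_of_signVector_eq (Eq.symm hy) hx

lemma ncard_connectedComponentIn_hyperplaneCompl [TopologicalSpace E] [ContinuousAdd E]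
    [ContinuousSMul ℝ E] (hA : ∀ f ∈ A, Continuous f)
    (hW : ∀ x y, signVector A x = signVector A y → x ∈ W → y ∈ W) :
    {R : Set E | (∃ x ∈ hyperplaneCompl A, R = connectedComponentIn (hyperplaneCompl A) x) ∧
      ∀ x ∈ R, x ∈ W}.ncard = cellCount A W := by
  have himage : {R : Set E | (∃ x ∈ hyperplaneCompl A,
      R = connectedComponentIn (hyperplaneCompl A) x) ∧ ∀ x ∈ R, x ∈ W} =
      connectedComponentIn (hyperplaneCompl A) '' (W ∩ hyperplaneCompl A) := by
    ext R
    constructor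
    · rintro ⟨⟨x, hx, rfl⟩, h⟩
      exact ⟨x, ⟨h x (mem_connectedComponentIn hx), hx⟩, rfl⟩
    · rintro ⟨x, ⟨hxW, hx⟩, rfl⟩
      refine ⟨⟨x, hx, rfl⟩, fun y hy ↦ ?_⟩
      rw [connectedComponentIn_hyperplaneCompl hA hx] at hy
      exact hW x y (Eq.symm hy) hxW
  rw [himage]
  refine ncard_image_eq_ncard_image_s11 fun x hx y hy ↦ ?_
  rw [connectedComponentIn_hyperplaneCompl hA hx.2, connectedComponentIn_hyperplaneCompl hA hy.2]
  refine ⟨fun h ↦ ?_, fun h ↦ by rw [h]⟩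
  have hxmem : x ∈ {z | signVector A z = signVector A x} := rfl
  rwa [h] at hxmem

end Cells

/-! ### Counting the cells of Shi arrangements -/

section Shi

variable {ι : Type*} {m : ℕ}

/-- The affine function `x ↦ x i - x j - c`, defining the hyperplane `x i - x j = c`. -/
noncomputable def coordDiff (i j : ι) (c : ℝ) : (ι → ℝ) →ᵃ[ℝ] ℝ :=
  (LinearMap.proj (R := ℝ) (φ := fun _ : ι ↦ ℝ) i - LinearMap.proj j).toAffineMap -
    AffineMap.const ℝ _ c

@[simp]
lemma coordDiff_apply (i j : ι) (c : ℝ) (x : ι → ℝ) : coordDiff i j c x = x i - x j - c := rfl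

lemma coordDiff_linear_ne_zero {i j : ι} (h : i ≠ j) (c : ℝ) :
    (coordDiff i j c).linear ≠ 0 := fun h0 ↦ by
  classical
  have := DFunLike.congr_fun h0 (Pi.single i 1)
  simp [coordDiff, h.symm] at this

/-- The Shi arrangement, as a set of affine functions. -/
def shi (n : ℕ) : Set ((Fin n → ℝ) →ᵃ[ℝ] ℝ) :=
  {f | ∃ i j : Fin n, i < j ∧ ∃ c < 2, f = coordDiff i j (c : ℕ)}

/-- The Shi arrangement in the coordinates `1, …, m`, together with the hyperplanes
`x 0 - x j = c`, `c < d j`, through a further coordinate `0`. -/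
def pointedShi (d : Fin m → ℕ) : Set ((Fin (m + 1) → ℝ) →ᵃ[ℝ] ℝ) :=
  {f | (∃ j, ∃ c < d j, f = coordDiff 0 j.succ (c : ℕ)) ∨
    ∃ i j : Fin m, i < j ∧ ∃ c < 2, f = coordDiff i.succ j.succ (c : ℕ)}

lemma finite_pointedShi (d : Fin m → ℕ) : (pointedShi d).Finite := by
  have hpoint : (⋃ j, (fun c : ℕ ↦ coordDiff 0 j.succ c) '' Set.Iio (d j)).Finite :=
    Set.finite_iUnion fun j ↦ (Set.finite_Iio _).image _
  have hshi : (⋃ (i : Fin m) (j : Fin m),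
      (fun c : ℕ ↦ coordDiff i.succ j.succ c) '' Set.Iio 2).Finite :=
    Set.finite_iUnion fun i ↦ Set.finite_iUnion fun j ↦ (Set.finite_Iio _).image _
  refine (hpoint.union hshi).subset ?_
  rintro _ (⟨j, c, hc, rfl⟩ | ⟨i, j, -, c, hc, rfl⟩)
  · exact Or.inl (Set.mem_iUnion.2 ⟨j, c, hc, rfl⟩)
  · exact Or.inr (Set.mem_iUnion₂.2 ⟨i, j, c, hc, rfl⟩)

lemma pointedShi_update (d : Fin m → ℕ) (p : Fin m) :
    pointedShi (Function.update d p (d p + 1)) =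
      insert (coordDiff 0 p.succ (d p)) (pointedShi d) := by
  ext f
  constructor
  · rintro (⟨j, c, hc, rfl⟩ | hf)
    · rcases eq_or_ne j p with rfl | hj
      · rw [Function.update_self, Nat.lt_succ_iff_lt_or_eq] at hc
        rcases hc with hc | rfl
        · exact Or.inr (Or.inl ⟨j, c, hc, rfl⟩)
        · exact Or.inl rfl
      · rw [Function.update_of_ne hj] at hc
        exact Or.inr (Or.inl ⟨j, c, hc, rfl⟩)
    · exact Or.inr (Or.inr hf)
  · have hle : d ≤ Function.update d p (d p + 1) := le_update_self_iff.2 (Nat.le_succ _)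
    rintro (rfl | ⟨j, c, hc, rfl⟩ | hf)
    · exact Or.inl ⟨p, d p, by simp, rfl⟩
    · exact Or.inl ⟨j, c, hc.trans_le (hle j), rfl⟩
    · exact Or.inr hf

lemma cellCount_pointedShi_update (d : Fin m → ℕ) (p : Fin m) :
    cellCount (pointedShi (Function.update d p (d p + 1))) Set.univ =
      cellCount (pointedShi d) Set.univ +
        cellCount (pointedShi d) {x | coordDiff 0 p.succ (d p) x = 0} := by
  rw [pointedShi_update, cellCount_insert (finite_pointedShi d)
    (coordDiff_linear_ne_zero (Fin.succ_ne_zero p).symm _)]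

/-- The staircase `(k, …, k, k + 1, …, k + 1)` with `s` entries `k`. -/
def stair (m k s : ℕ) (j : Fin m) : ℕ := if j < s then k else k + 1

lemma shi_succ (m : ℕ) : shi (m + 1) = pointedShi (stair m 1 0) := by
  ext f
  simp only [shi, pointedShi, stair, Set.mem_ofPred_eq, Fin.exists_fin_succ, Fin.not_lt_zero,
    Nat.not_lt_zero, if_false, false_and, false_or, Fin.succ_pos, true_and, Fin.succ_lt_succ_iff]

lemma stair_last (k : ℕ) : stair m (k + 1) m = stair m k 0 := by
  ext j
  simp [stair]

lemma stair_self (k : ℕ) (p : Fin m) : stair m k (p + 1) p = k := by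
  simp [stair]

lemma stair_eq_update (k : ℕ) (p : Fin m) :
    stair m k p = Function.update (stair m k (p + 1)) p (stair m k (p + 1) p + 1) := by
  ext j
  rcases eq_or_ne j p with rfl | hj
  · simp [stair]
  · have := Fin.val_ne_of_ne hj
    simp only [Function.update_of_ne hj, stair]
    grind

lemma cellCount_pointedShi_stair (k : ℕ) (p : Fin m) :
    cellCount (pointedShi (stair m k p)) Set.univ =
      cellCount (pointedShi (stair m k (p + 1))) Set.univ +
        cellCount (pointedShi (stair m k (p + 1))) {x | coordDiff 0 p.succ k x = 0} := by
  rw [stair_eq_update, cellCount_pointedShi_update, stair_self]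

lemma cellCount_pointedShi_zero (m : ℕ) :
    cellCount (pointedShi fun _ : Fin m ↦ 0) Set.univ = cellCount (shi m) Set.univ := by
  have hsurj : Function.Surjective (Fin.tail : (Fin (m + 1) → ℝ) → Fin m → ℝ) :=
    fun x ↦ ⟨Fin.cons 0 x, Fin.tail_cons _ _⟩
  rw [← Set.image_univ_of_surjective hsurj]
  refine (cellCount_image Fin.tail ?_ ?_).symm
  · rintro _ ⟨i, j, hij, c, hc, rfl⟩
    exact Or.inl ⟨_, Or.inr ⟨i, j, hij, c, hc, rfl⟩, Or.inl fun _ _ ↦ rfl⟩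
  · rintro _ (⟨j, c, hc, -⟩ | ⟨i, j, hij, c, hc, rfl⟩)
    · exact absurd hc c.not_lt_zero
    · exact ⟨_, ⟨i, j, hij, c, hc, rfl⟩, Or.inl fun _ _ ↦ rfl⟩

lemma cellCount_pointedShi_stair_zero_restrict (p : Fin m) :
    cellCount (pointedShi (stair m 0 (p + 1))) {x | coordDiff 0 p.succ (0 : ℕ) x = 0} =
      cellCount (shi m) Set.univ := by
  have hwall : {x | coordDiff 0 p.succ (0 : ℕ) x = 0} =
      (fun x : Fin m → ℝ ↦ (Fin.cons (x p) x : Fin (m + 1) → ℝ)) '' Set.univ := by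
    ext x
    simp only [coordDiff_apply, Nat.cast_zero, sub_zero, sub_eq_zero, Set.mem_ofPred_eq,
      Set.image_univ, Set.mem_range]
    refine ⟨fun hx ↦ ⟨Fin.tail x, ?_⟩, ?_⟩
    · rw [Fin.tail, ← hx, Fin.cons_self_tail]
    · rintro ⟨y, rfl⟩
      rw [Fin.cons_zero, Fin.cons_succ]
  rw [hwall]
  refine cellCount_image _ ?_ ?_
  · rintro _ (⟨j, c, hc, rfl⟩ | ⟨i, j, hij, c, hc, rfl⟩)
    · have hpj : p < j := by
        simp only [stair] at hc
        grind
      have hc0 : c < 2 := by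
        simp only [stair] at hc
        grind
      exact Or.inl ⟨_, ⟨p, j, hpj, c, hc0, rfl⟩, Or.inl fun _ _ ↦ rfl⟩
    · exact Or.inl ⟨_, ⟨i, j, hij, c, hc, rfl⟩, Or.inl fun _ _ ↦ rfl⟩
  · rintro _ ⟨i, j, hij, c, hc, rfl⟩
    exact ⟨_, Or.inr ⟨i, j, hij, c, hc, rfl⟩, Or.inl fun _ _ ↦ rfl⟩

lemma cellCount_pointedShi_stair_zero {s t : ℕ} (h : s + t = m) :
    cellCount (pointedShi (stair m 0 s)) Set.univ =
      (t + 1) * cellCount (shi m) Set.univ := by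
  induction t generalizing s with
  | zero =>
    have hstair : stair m 0 s = fun _ ↦ 0 := by
      ext j
      simp only [stair]
      grind
    rw [hstair, cellCount_pointedShi_zero, zero_add, one_mul]
  | succ t ih =>
    let p : Fin m := ⟨s, by lia⟩
    have := cellCount_pointedShi_stair 0 p
    rw [cellCount_pointedShi_stair_zero_restrict] at this
    rw [this, ih (by lia)]
    ring

/-- The parametrisation of the hyperplane `x 0 - x p.succ = c` by the other coordinates. -/
def wallParam (p : Fin (m + 1)) (c : ℝ) (x : Fin (m + 1) → ℝ) : Fin (m + 2) → ℝ :=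
  p.succ.insertNth (x 0 - c) x

@[simp]
lemma wallParam_zero (p : Fin (m + 1)) (c : ℝ) (x : Fin (m + 1) → ℝ) :
    wallParam p c x 0 = x 0 := by
  rw [← Fin.succ_succAbove_zero p]
  exact Fin.insertNth_apply_succAbove (α := fun _ ↦ ℝ) p.succ (x 0 - c) x 0

@[simp]
lemma wallParam_succ_self (p : Fin (m + 1)) (c : ℝ) (x : Fin (m + 1) → ℝ) :
    wallParam p c x p.succ = x 0 - c :=
  Fin.insertNth_apply_same (α := fun _ ↦ ℝ) p.succ (x 0 - c) x

@[simp]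
lemma wallParam_succ_succAbove (p : Fin (m + 1)) (c : ℝ) (x : Fin (m + 1) → ℝ) (i : Fin m) :
    wallParam p c x (p.succAbove i).succ = x i.succ := by
  rw [← Fin.succ_succAbove_succ]
  exact Fin.insertNth_apply_succAbove (α := fun _ ↦ ℝ) p.succ (x 0 - c) x i.succ

lemma range_wallParam (p : Fin (m + 1)) (c : ℝ) :
    Set.range (wallParam p c) = {x | coordDiff 0 p.succ c x = 0} := by
  ext x
  simp only [Set.mem_range, Set.mem_ofPred_eq, coordDiff_apply]
  refine ⟨?_, fun hx ↦ ⟨p.succ.removeNth x, ?_⟩⟩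
  · rintro ⟨y, rfl⟩
    rw [wallParam_zero, wallParam_succ_self, sub_sub_cancel, sub_self]
  · have hp : p.succ.removeNth x 0 - c = x p.succ := by
      rw [Fin.removeNth_apply, Fin.succ_succAbove_zero]
      linear_combination hx
    rw [wallParam, hp, Fin.insertNth_self_removeNth]

/-- The second alternative is that of the hyperplanes `x 0 - x p.succ = b`, `b < c`, which are
parallel to the wall. -/
lemma exists_eqOn_comp_wallParam {c : ℕ} {p : Fin (m + 1)} {f : (Fin (m + 2) → ℝ) →ᵃ[ℝ] ℝ}
    (hc : 0 < c) (hf : f ∈ pointedShi (stair (m + 1) c (p + 1))) :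
    (∃ g ∈ pointedShi (stair m (c + 1) p), Set.EqOn (f ∘ wallParam p c) g Set.univ ∨
        Set.EqOn (f ∘ wallParam p c) (-g) Set.univ) ∨
      ∃ s : SignType, s ≠ 0 ∧ ∀ x ∈ Set.univ, SignType.sign (f (wallParam p c x)) = s := by
  rcases hf with ⟨j, b, hb, rfl⟩ | ⟨i, j, hij, b, hb, rfl⟩
  · rcases p.eq_self_or_eq_succAbove j with rfl | ⟨j, rfl⟩
    · rw [stair_self] at hb
      refine Or.inr ⟨1, one_ne_zero, fun x _ ↦ sign_eq_one_iff.2 ?_⟩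
      have : (b : ℝ) < c := Nat.cast_lt.2 hb
      simpa
    · refine Or.inl ⟨_, Or.inl ⟨j, b, hb.trans_le ?_, rfl⟩, Or.inl fun x _ ↦ by simp⟩
      simp only [stair, Fin.succAbove, Fin.lt_def]
      grind
  · left
    rcases p.eq_self_or_eq_succAbove i with rfl | ⟨i, rfl⟩
    · obtain ⟨j, rfl⟩ := Fin.exists_succAbove_eq hij.ne'
      have hj := Fin.lt_succAbove_iff_le_castSucc i j |>.1 hij
      refine ⟨_, Or.inl ⟨j, c + b, ?_, rfl⟩, Or.inl fun x _ ↦ ?_⟩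
      · simp only [stair]
        grind
      · simp only [Function.comp_apply, coordDiff_apply, wallParam_succ_self,
          wallParam_succ_succAbove, Nat.cast_add]
        ring
    · rcases p.eq_self_or_eq_succAbove j with rfl | ⟨j, rfl⟩
      · refine ⟨_, Or.inl ⟨i, c - b, ?_, rfl⟩, Or.inr fun x _ ↦ ?_⟩
        · simp only [stair]
          grind
        · simp only [Function.comp_apply, coordDiff_apply, wallParam_succ_succAbove,
            wallParam_succ_self, Nat.cast_sub (show b ≤ c by lia), Pi.neg_apply]
          ring
      · exact ⟨_, Or.inr ⟨i, j, by simpa using hij, b, hb, rfl⟩, Or.inl fun x _ ↦ by simp⟩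

lemma exists_comp_wallParam_eqOn {c : ℕ} {p : Fin (m + 1)} {g : (Fin (m + 1) → ℝ) →ᵃ[ℝ] ℝ}
    (hg : g ∈ pointedShi (stair m (c + 1) p)) :
    ∃ f ∈ pointedShi (stair (m + 1) c (p + 1)), Set.EqOn (f ∘ wallParam p c) g Set.univ ∨
      Set.EqOn (f ∘ wallParam p c) (-g) Set.univ := by
  rcases hg with ⟨i, b, hb, rfl⟩ | ⟨i, j, hij, b, hb, rfl⟩
  · by_cases hlt : b < stair (m + 1) c (p + 1) (p.succAbove i)
    · exact ⟨_, Or.inl ⟨_, b, hlt, rfl⟩, Or.inl fun x _ ↦ by simp⟩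
    · rcases lt_or_ge i.castSucc p with hi | hi
      · obtain rfl : b = c := by
          simp only [stair, Fin.succAbove_of_castSucc_lt _ _ hi] at hb hlt
          grind
        refine ⟨_, Or.inr ⟨_, p, Fin.succAbove_lt_iff_castSucc_lt p i |>.2 hi, 0, two_pos, rfl⟩,
          Or.inr fun x _ ↦ ?_⟩
        simp only [Nat.cast_zero, Function.comp_apply, coordDiff_apply, wallParam_succ_succAbove,
          wallParam_succ_self, Pi.neg_apply]
        ring
      · obtain rfl : b = c + 1 := by
          simp only [stair, Fin.succAbove_of_le_castSucc _ _ hi] at hb hlt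
          grind
        refine ⟨_, Or.inr ⟨p, _, Fin.lt_succAbove_iff_le_castSucc p i |>.2 hi, 1, one_lt_two, rfl⟩,
          Or.inl fun x _ ↦ ?_⟩
        simp only [Nat.cast_one, Function.comp_apply, coordDiff_apply, wallParam_succ_self,
          wallParam_succ_succAbove, Nat.cast_add]
        ring
  · exact ⟨_, Or.inr ⟨p.succAbove i, p.succAbove j, by simpa using hij, b, hb, rfl⟩,
      Or.inl fun x _ ↦ by simp⟩

lemma cellCount_pointedShi_stair_restrict {c : ℕ} (hc : 0 < c) (p : Fin (m + 1)) :
    cellCount (pointedShi (stair (m + 1) c (p + 1))) {x | coordDiff 0 p.succ c x = 0} =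
      cellCount (pointedShi (stair m (c + 1) p)) Set.univ := by
  rw [← range_wallParam, ← Set.image_univ]
  exact cellCount_image _ (fun _ ↦ exists_eqOn_comp_wallParam hc)
    fun _ ↦ exists_comp_wallParam_eqOn

lemma cellCount_pointedShi_fin_zero (d : Fin 0 → ℕ) : cellCount (pointedShi d) Set.univ = 1 := by
  have hempty : pointedShi d = ∅ :=
    Set.eq_empty_of_forall_notMem fun f hf ↦ by simp [pointedShi] at hf
  rw [hempty, cellCount, Set.ncard_eq_one]
  exact ⟨signVector ∅ 0, Set.eq_singleton_iff_unique_mem.2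
    ⟨⟨0, by simp [hyperplaneCompl], rfl⟩, fun _ _ ↦ funext fun f ↦ f.2.elim⟩⟩

lemma cellCount_pointedShi_stair_succ {k s t : ℕ}
    (htop : cellCount (pointedShi (stair (m + 1) (k + 1) (m + 1))) Set.univ =
      (m + k + 2) ^ (m + 1))
    (hrestrict : ∀ {s t}, s + t = m → cellCount (pointedShi (stair m (k + 2) s)) Set.univ =
      (m + k + 2) ^ s * (m + k + 3) ^ t) (h : s + t = m + 1) :
    cellCount (pointedShi (stair (m + 1) (k + 1) s)) Set.univ =
      (m + k + 2) ^ s * (m + k + 3) ^ t := by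
  induction t generalizing s with
  | zero => rw [show s = m + 1 from h, htop, pow_zero, mul_one]
  | succ t ih =>
    let p : Fin (m + 1) := ⟨s, by lia⟩
    have hdelete := cellCount_pointedShi_stair (k + 1) p
    rw [cellCount_pointedShi_stair_restrict k.succ_pos] at hdelete
    rw [hdelete, ih (s := s + 1) (by lia), hrestrict (s := s) (t := t) (by lia)]
    ring

theorem cellCount_pointedShi_stair_eq {k s t : ℕ} (h : s + t = m) :
    cellCount (pointedShi (stair m (k + 1) s)) Set.univ =
      (m + k + 1) ^ s * (m + k + 2) ^ t := by
  induction m generalizing k s t with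
  | zero =>
    obtain ⟨rfl, rfl⟩ := Nat.add_eq_zero_iff.1 h
    rw [cellCount_pointedShi_fin_zero, pow_zero, pow_zero, mul_one]
  | succ m ihm =>
    have hrestrict (k : ℕ) {s t} (h : s + t = m) :
        cellCount (pointedShi (stair m (k + 2) s)) Set.univ =
          (m + k + 2) ^ s * (m + k + 3) ^ t := by
      rw [ihm h]
      ring
    suffices htop : cellCount (pointedShi (stair (m + 1) (k + 1) (m + 1))) Set.univ =
        (m + k + 2) ^ (m + 1) by
      rw [cellCount_pointedShi_stair_succ htop (hrestrict k) h]
      ring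
    clear h
    induction k with
    | zero =>
      have hshi : cellCount (shi (m + 1)) Set.univ = (m + 2) ^ m := by
        rw [shi_succ, ihm (Nat.zero_add m)]
        ring
      rw [stair_last, cellCount_pointedShi_stair_zero (zero_add _), hshi]
      ring
    | succ k ihk =>
      rw [stair_last, cellCount_pointedShi_stair_succ ihk (hrestrict k) (zero_add _)]
      ring

theorem cellCount_shi (m : ℕ) : cellCount (shi (m + 1)) Set.univ = (m + 2) ^ m := by
  rw [shi_succ, cellCount_pointedShi_stair_eq (Nat.zero_add m)]
  ring

end Shi

/-! ### Counting parking functions by the cycle lemma -/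

section Parking

variable {n : ℕ}

/-- The excess of `f` at `q` over the parking condition `q ≤ #{i | f i < q}`. -/
def excess (f : Fin n → Fin (n + 1)) (q : Fin (n + 1)) : ℤ :=
  (Finset.univ.filter fun i ↦ f i < q).card - q

lemma isPF_val_iff {f : Fin n → Fin (n + 1)} :
    IsPF n (fun i ↦ f i) ↔ ∀ q, 0 ≤ excess f q := by
  simp only [IsPF, excess, sub_nonneg, Nat.cast_le, Fin.forall_iff, Nat.lt_succ_iff, Fin.lt_def]

lemma card_filter_sub_lt_sub (f : Fin n → Fin (n + 1)) (p q : Fin (n + 1)) :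
    (Finset.univ.filter fun i ↦ f i - p < q - p).card + (Finset.univ.filter fun i ↦ f i < p).card =
      (Finset.univ.filter fun i ↦ f i < q).card + if q < p then n else 0 := by
  have hpoint (x : Fin (n + 1)) : ((if x - p < q - p then 1 else 0) + if x < p then 1 else 0) =
      (if x < q then 1 else 0) + if q < p then 1 else 0 := by
    have := Fin.intCast_val_sub_eq_sub_add_ite x p
    have := Fin.intCast_val_sub_eq_sub_add_ite q p
    simp only [Fin.lt_def, Fin.le_def] at *
    split_ifs at * <;> omega
  have hn : (if q < p then n else 0) = ∑ _i : Fin n, if q < p then 1 else 0 := by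
    simp
  simp only [Finset.card_filter, hn, ← Finset.sum_add_distrib, hpoint]

lemma excess_sub (f : Fin n → Fin (n + 1)) (p q : Fin (n + 1)) :
    excess (fun i ↦ f i - p) (q - p) = excess f q - excess f p - if q < p then 1 else 0 := by
  have hcard := card_filter_sub_lt_sub f p q
  rw [excess, excess, excess, Fin.intCast_val_sub_eq_sub_add_ite]
  grind

/-- A rotation of `f` parks exactly when it starts at the first place where the excess of `f` is
least. -/
lemma isPF_sub_iff (f : Fin n → Fin (n + 1)) (p : Fin (n + 1)) :
    IsPF n (fun i ↦ (f i - p : Fin (n + 1))) ↔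
      ∀ q, toLex (excess f p, p) ≤ toLex (excess f q, q) := by
  rw [isPF_val_iff, ← (Equiv.subRight p).forall_congr_right]
  refine forall_congr' fun q ↦ ?_
  rw [Equiv.subRight_apply, excess_sub, Prod.Lex.toLex_le_toLex]
  grind

lemma existsUnique_isPF_sub (f : Fin n → Fin (n + 1)) :
    ∃! p : Fin (n + 1), IsPF n (fun i ↦ (f i - p : Fin (n + 1))) := by
  simp only [isPF_sub_iff]
  obtain ⟨p, hp⟩ := Finite.exists_min fun q ↦ toLex (excess f q, q)
  refine ⟨p, hp, fun q hq ↦ ?_⟩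
  exact congrArg (fun x ↦ (ofLex x).2) ((hq p).antisymm (hp q))

lemma IsPF.apply_lt {a : Fin n → ℕ} (ha : IsPF n a) (i : Fin n) : a i < n := by
  have hcard : (Finset.univ.filter fun i ↦ a i < n).card = (Finset.univ : Finset (Fin n)).card :=
    (Finset.card_filter_le _ _).antisymm (by simpa using ha n le_rfl)
  exact Finset.card_filter_eq_iff.1 hcard i (Finset.mem_univ i)

lemma IsPF.exists_eq_val {a : Fin n → ℕ} (ha : IsPF n a) :
    ∃ f : Fin n → Fin (n + 1), (fun i ↦ (f i : ℕ)) = a :=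
  ⟨fun i ↦ ⟨a i, (ha.apply_lt i).trans n.lt_succ_self⟩, rfl⟩

lemma finite_isPF (n : ℕ) : {a | IsPF n a}.Finite :=
  (Set.finite_range fun (f : Fin n → Fin (n + 1)) i ↦ (f i : ℕ)).subset
    fun _ ↦ IsPF.exists_eq_val

lemma ncard_isPF_and (P : (Fin n → ℕ) → Prop) : {a | IsPF n a ∧ P a}.ncard =
    {f : Fin n → Fin (n + 1) | IsPF n (fun i ↦ f i) ∧ P fun i ↦ f i}.ncard := by
  have hval : Function.Injective fun (f : Fin n → Fin (n + 1)) i ↦ (f i : ℕ) :=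
    Fin.val_injective.comp_left
  rw [← Set.ncard_image_of_injective _ hval]
  congr 1
  ext a
  constructor
  · rintro ⟨ha, hPa⟩
    obtain ⟨f, rfl⟩ := ha.exists_eq_val
    exact ⟨f, ⟨ha, hPa⟩, rfl⟩
  · rintro ⟨f, hf, rfl⟩
    exact hf

/-- Pollak's argument: each of the rotation classes counted on the right, of size `n + 1`, contains
one parking function. -/
theorem ncard_isPF_and_mul {P : (Fin n → ℕ) → Prop}
    (hP : ∀ (f : Fin n → Fin (n + 1)) p, P (fun i ↦ (f i + p : Fin (n + 1))) ↔ P fun i ↦ f i) :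
    {a | IsPF n a ∧ P a}.ncard * (n + 1) =
      {f : Fin n → Fin (n + 1) | P fun i ↦ f i}.ncard := by
  let rotate (x : (Fin n → Fin (n + 1)) × Fin (n + 1)) (i : Fin n) := x.1 i + x.2
  let parking : Set (Fin n → Fin (n + 1)) := {f | IsPF n (fun i ↦ f i) ∧ P fun i ↦ f i}
  have himage : rotate '' parking ×ˢ Set.univ = {f | P fun i ↦ f i} := by
    ext f
    constructor
    · rintro ⟨⟨g, p⟩, ⟨hg, -⟩, rfl⟩
      exact (hP g p).2 hg.2
    · intro hf
      obtain ⟨p, hp, -⟩ := existsUnique_isPF_sub f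
      have hadd : rotate (fun i ↦ f i - p, p) = f := funext fun i ↦ sub_add_cancel _ _
      refine ⟨_, ⟨⟨hp, (hP _ p).1 ?_⟩, trivial⟩, hadd⟩
      simpa only [sub_add_cancel] using! hf
  have hinj : Set.InjOn rotate (parking ×ˢ Set.univ) := by
    rintro ⟨f, p⟩ ⟨hf, -⟩ ⟨g, q⟩ ⟨hg, -⟩ hfg
    have hparks {f : Fin n → Fin (n + 1)} (p) (hf : f ∈ parking) :
        IsPF n fun i ↦ (rotate (f, p) i - p : Fin (n + 1)) := by
      simpa only [rotate, add_sub_cancel_right] using hf.1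
    obtain rfl : p = q :=
      (existsUnique_isPF_sub _).unique (hparks p hf) (by rw [hfg]; exact hparks q hg)
    exact Prod.ext (funext fun i ↦ add_right_cancel (congrFun hfg i)) rfl
  rw [ncard_isPF_and, ← himage, hinj.ncard_image, Set.ncard_prod, Set.ncard_univ, Nat.card_fin]

lemma ncard_isPF (n : ℕ) : {a | IsPF (n + 1) a}.ncard = (n + 2) ^ n := by
  have h := ncard_isPF_and_mul (n := n + 1) (P := fun _ ↦ True) fun _ _ ↦ Iff.rfl
  simp only [and_true, Set.ofPred_true, Set.ncard_univ, Nat.card_fun, Nat.card_fin, pow_succ] at h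
  exact Nat.eq_of_mul_eq_mul_right (by lia) h

lemma ncard_setOf_zero_eq_one (m N : ℕ) :
    {f : Fin (m + 2) → Fin N | f 0 = f 1}.ncard = N ^ (m + 1) := by
  have hrange : {f : Fin (m + 2) → Fin N | f 0 = f 1} =
      Set.range fun g : Fin (m + 1) → Fin N ↦ (Fin.cons (g 0) g : Fin (m + 2) → Fin N) := by
    ext f
    constructor
    · intro hf
      refine ⟨Fin.tail f, ?_⟩
      have h0 : Fin.tail f 0 = f 0 := Eq.symm hf
      simp only [h0, Fin.cons_self_tail]
    · rintro ⟨g, rfl⟩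
      rfl
  have hinj : Function.Injective
      fun g : Fin (m + 1) → Fin N ↦ (Fin.cons (g 0) g : Fin (m + 2) → Fin N) :=
    fun g g' h ↦ by simpa only [Fin.tail_cons] using congrArg Fin.tail h
  rw [hrange, ← Set.image_univ, Set.ncard_image_of_injective _ hinj, Set.ncard_univ, Nat.card_fun,
    Nat.card_fin, Nat.card_fin]

lemma ncard_isPF_zero_eq_one (m : ℕ) :
    {a | IsPF (m + 2) a ∧ a 0 = a 1}.ncard = (m + 3) ^ m := by
  have h := ncard_isPF_and_mul (n := m + 2) (P := fun a ↦ a 0 = a 1) fun f p ↦ by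
    simp only [Fin.val_inj, add_left_inj]
  simp only [Fin.val_inj, ncard_setOf_zero_eq_one, pow_succ (m + 3) m] at h
  exact Nat.eq_of_mul_eq_mul_right (by lia) h

lemma IsPF.comp_perm {a : Fin n → ℕ} (ha : IsPF n a) (σ : Equiv.Perm (Fin n)) :
    IsPF n (a ∘ σ) := fun k hk ↦ (ha k hk).trans_eq <|
  .symm <| Finset.card_equiv σ fun i ↦ by simp

lemma ncard_isPF_lt_comm (i j : Fin n) :
    {a | IsPF n a ∧ a i < a j}.ncard = {a | IsPF n a ∧ a j < a i}.ncard := by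
  refine Set.ncard_congr (fun a _ ↦ a ∘ Equiv.swap i j) ?_ ?_ ?_
  · exact fun a ⟨ha, hlt⟩ ↦ ⟨ha.comp_perm _, by simpa using hlt⟩
  · exact fun a b _ _ h ↦ (Equiv.swap i j).surjective.injective_comp_right h
  · exact fun b ⟨hb, hlt⟩ ↦
      ⟨b ∘ Equiv.swap i j, ⟨hb.comp_perm _, by simpa using hlt⟩, by ext; simp⟩

lemma two_mul_ncard_isPF_lt_add (i j : Fin n) :
    2 * {a | IsPF n a ∧ a i < a j}.ncard + {a | IsPF n a ∧ a i = a j}.ncard =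
      {a | IsPF n a}.ncard := by
  have hfinite (P : (Fin n → ℕ) → Prop) : {a | IsPF n a ∧ P a}.Finite :=
    (finite_isPF n).subset fun _ h ↦ h.1
  have hunion : {a | IsPF n a} = {a | IsPF n a ∧ a i < a j} ∪ {a | IsPF n a ∧ a j < a i} ∪
      {a | IsPF n a ∧ a i = a j} := by
    ext a
    have := lt_trichotomy (a i) (a j)
    simp only [Set.mem_union, Set.mem_ofPred_eq]
    tauto
  rw [hunion, Set.ncard_union_eq _ ((hfinite _).union (hfinite _)) (hfinite _),
    Set.ncard_union_eq _ (hfinite _) (hfinite _), ncard_isPF_lt_comm j i, two_mul]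
  · exact Set.disjoint_left.2 fun a ha hb ↦ lt_asymm ha.2 hb.2
  · exact Set.disjoint_left.2 fun a ha hb ↦ ha.elim (fun h ↦ h.2.ne hb.2) fun h ↦ h.2.ne' hb.2

end Parking

/-! ### The slabs of the Shi arrangement -/

section Slabs

variable {m : ℕ}

lemma coordDiff_zero_mem_shi {n : ℕ} {i j : Fin n} (h : i < j) : coordDiff i j 0 ∈ shi n :=
  ⟨i, j, h, 0, two_pos, by rw [Nat.cast_zero]⟩

lemma coordDiff_one_mem_shi {n : ℕ} {i j : Fin n} (h : i < j) : coordDiff i j 1 ∈ shi n :=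
  ⟨i, j, h, 1, one_lt_two, by rw [Nat.cast_one]⟩

lemma shiComp_eq_hyperplaneCompl (n : ℕ) : shiComp n = hyperplaneCompl (shi n) := by
  ext x
  constructor
  · rintro h _ ⟨i, j, hij, c, hc, rfl⟩
    interval_cases c
    · simpa using (h i j hij).1
    · simpa [sub_ne_zero] using (h i j hij).2
  · refine fun h i j hij ↦ ⟨?_, ?_⟩
    · simpa using h _ (coordDiff_zero_mem_shi hij)
    · simpa [sub_ne_zero] using h _ (coordDiff_one_mem_shi hij)

lemma ncard_isShiRegion {n : ℕ} {P : (Fin n → ℝ) → Prop}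
    (hP : ∀ x y, signVector (shi n) x = signVector (shi n) y → P x → P y) :
    {R | IsShiRegion n R ∧ ∀ x ∈ R, P x}.ncard = cellCount (shi n) {x | P x} := by
  simp only [IsShiRegion, shiComp_eq_hyperplaneCompl]
  exact ncard_connectedComponentIn_hyperplaneCompl
    (fun f _ ↦ f.continuous_of_finiteDimensional) hP

lemma ncard_isShiRegion_lt_zero {n : ℕ} {i j : Fin n} (hij : i < j) :
    {R | IsShiRegion n R ∧ ∀ x ∈ R, x i - x j < 0}.ncard =
      cellCount (shi n) {x | coordDiff i j 0 x < 0} := by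
  simpa only [coordDiff_apply, sub_zero] using
    ncard_isShiRegion (P := fun x ↦ coordDiff i j 0 x < 0) fun _ _ h ↦
      (neg_iff_of_signVector_eq h (coordDiff_zero_mem_shi hij)).1

lemma ncard_isShiRegion_mem_Ioo {n : ℕ} {i j : Fin n} (hij : i < j) :
    {R | IsShiRegion n R ∧ ∀ x ∈ R, 0 < x i - x j ∧ x i - x j < 1}.ncard =
      cellCount (shi n) {x | 0 < coordDiff i j 0 x ∧ coordDiff i j 1 x < 0} := by
  simpa only [coordDiff_apply, sub_zero, sub_lt_zero (b := (1 : ℝ))] using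
    ncard_isShiRegion (P := fun x ↦ 0 < coordDiff i j 0 x ∧ coordDiff i j 1 x < 0)
      fun _ _ h ↦ And.imp (pos_iff_of_signVector_eq h (coordDiff_zero_mem_shi hij)).1
        (neg_iff_of_signVector_eq h (coordDiff_one_mem_shi hij)).1

lemma ncard_isShiRegion_one_lt {n : ℕ} {i j : Fin n} (hij : i < j) :
    {R | IsShiRegion n R ∧ ∀ x ∈ R, 1 < x i - x j}.ncard =
      cellCount (shi n) {x | 0 < coordDiff i j 1 x} := by
  simpa only [coordDiff_apply, sub_pos (b := (1 : ℝ))] using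
    ncard_isShiRegion (P := fun x ↦ 0 < coordDiff i j 1 x) fun _ _ h ↦
      (pos_iff_of_signVector_eq h (coordDiff_one_mem_shi hij)).1

/-- The Shi arrangement in `m + 2` coordinates without the hyperplanes `x 0 - x 1 = c`. -/
def shiOffFirstPair (m : ℕ) : Set ((Fin (m + 2) → ℝ) →ᵃ[ℝ] ℝ) :=
  pointedShi (Fin.cons 0 fun _ : Fin m ↦ 2 : Fin (m + 1) → ℕ)

lemma finite_shiOffFirstPair : (shiOffFirstPair m).Finite := finite_pointedShi _

lemma pointedShi_stair_one_one (m : ℕ) :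
    pointedShi (stair (m + 1) 1 1) = insert (coordDiff 0 1 0) (shiOffFirstPair m) := by
  have hstair : stair (m + 1) 1 1 =
      Function.update (Fin.cons 0 fun _ : Fin m ↦ 2 : Fin (m + 1) → ℕ) 0 (0 + 1) := by
    ext j
    cases j using Fin.cases <;> simp [stair]
  rw [hstair]
  simpa [shiOffFirstPair] using pointedShi_update (Fin.cons 0 fun _ : Fin m ↦ 2 : Fin (m + 1) → ℕ) 0

lemma shi_add_two (m : ℕ) :
    shi (m + 2) = insert (coordDiff 0 1 1) (pointedShi (stair (m + 1) 1 1)) := by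
  have hstair := stair_eq_update 1 (0 : Fin (m + 1))
  rw [stair_self, Fin.val_zero, zero_add] at hstair
  rw [shi_succ, hstair]
  simpa [stair] using pointedShi_update (stair (m + 1) 1 1) 0

lemma exists_shiOffFirstPair_comp_swap {f : (Fin (m + 2) → ℝ) →ᵃ[ℝ] ℝ}
    (hf : f ∈ shiOffFirstPair m) :
    ∃ g ∈ shiOffFirstPair m, ∀ x, f (x ∘ Equiv.swap 0 1) = g x := by
  have swap_add_two (i : Fin m) : Equiv.swap (0 : Fin (m + 2)) 1 i.succ.succ = i.succ.succ :=
    Equiv.swap_apply_of_ne_of_ne (Fin.succ_ne_zero _)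
      ((Fin.succ_injective _).ne (Fin.succ_ne_zero _))
  rcases hf with ⟨j, c, hc, rfl⟩ | ⟨i, j, hij, c, hc, rfl⟩
  · cases j using Fin.cases with
    | zero => exact absurd hc c.not_lt_zero
    | succ j =>
      exact ⟨_, Or.inr ⟨0, j.succ, j.succ_pos, c, hc, rfl⟩, fun x ↦ by simp [swap_add_two]⟩
  · obtain ⟨j, rfl⟩ := Fin.exists_succ_eq.2 (Fin.ne_zero_of_lt hij)
    cases i using Fin.cases with
    | zero => exact ⟨_, Or.inl ⟨j.succ, c, hc, rfl⟩, fun x ↦ by simp [swap_add_two]⟩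
    | succ i => exact ⟨_, Or.inr ⟨i.succ, j.succ, hij, c, hc, rfl⟩, fun x ↦ by simp [swap_add_two]⟩

lemma cellCount_shiOffFirstPair_pos_eq_neg (m : ℕ) :
    cellCount (shiOffFirstPair m) {x | 0 < coordDiff 0 1 0 x} =
      cellCount (shiOffFirstPair m) {x | coordDiff 0 1 0 x < 0} := by
  have himage : {x : Fin (m + 2) → ℝ | 0 < coordDiff 0 1 0 x} =
      (· ∘ Equiv.swap 0 1) '' {x | coordDiff 0 1 0 x < 0} := by
    ext x
    constructor
    · exact fun hx ↦ ⟨x ∘ Equiv.swap 0 1, by simpa using hx, by ext; simp⟩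
    · rintro ⟨y, hy, rfl⟩
      simpa using hy
  rw [himage]
  refine cellCount_image _ (fun f hf ↦ ?_) fun f hf ↦ ?_ <;>
    obtain ⟨g, hg, hfg⟩ := exists_shiOffFirstPair_comp_swap hf
  · exact Or.inl ⟨g, hg, Or.inl fun x _ ↦ hfg x⟩
  · refine ⟨g, hg, Or.inl fun x _ ↦ ?_⟩
    rw [Function.comp_apply, ← hfg]
    congr 1
    ext
    simp

lemma cellCount_wall (m : ℕ) :
    cellCount (pointedShi (stair (m + 1) 1 1)) {x | coordDiff 0 1 1 x = 0} = (m + 3) ^ m := by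
  have hrestrict := cellCount_pointedShi_stair_restrict one_pos (0 : Fin (m + 1))
  rw [Fin.val_zero, cellCount_pointedShi_stair_eq (Nat.zero_add m), pow_zero, one_mul] at hrestrict
  simpa using hrestrict

lemma two_mul_cellCount_neg_add (m : ℕ) :
    2 * cellCount (shi (m + 2)) {x | coordDiff 0 1 0 x < 0} + (m + 3) ^ m = (m + 3) ^ (m + 1) := by
  have hneg : cellCount (shi (m + 2)) {x | coordDiff 0 1 0 x < 0} =
      cellCount (shiOffFirstPair m) {x | coordDiff 0 1 0 x < 0} := by
    rw [shi_add_two, cellCount_insert_of_neg, pointedShi_stair_one_one,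
      cellCount_insert_of_neg (W := {x | coordDiff 0 1 0 x < 0}) fun x hx ↦ hx]
    intro x hx
    simp only [Set.mem_ofPred_eq, coordDiff_apply] at hx ⊢
    linarith
  calc 2 * cellCount (shi (m + 2)) {x | coordDiff 0 1 0 x < 0} + (m + 3) ^ m
      = cellCount (pointedShi (stair (m + 1) 1 1)) Set.univ + (m + 3) ^ m := by
        rw [pointedShi_stair_one_one, cellCount_insert_eq_add finite_shiOffFirstPair,
          cellCount_shiOffFirstPair_pos_eq_neg, hneg, two_mul]
    _ = cellCount (shi (m + 2)) Set.univ := by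
        rw [shi_add_two, cellCount_insert (finite_pointedShi _)
          (coordDiff_linear_ne_zero Fin.zero_ne_one _), cellCount_wall]
    _ = (m + 3) ^ (m + 1) := cellCount_shi (m + 1)

lemma cellCount_slabs_add (m : ℕ) :
    cellCount (shi (m + 2)) {x | coordDiff 0 1 0 x < 0} +
      cellCount (shi (m + 2)) {x | 0 < coordDiff 0 1 0 x ∧ coordDiff 0 1 1 x < 0} +
      cellCount (shi (m + 2)) {x | 0 < coordDiff 0 1 1 x} = (m + 3) ^ (m + 1) := by
  have hfinite : (shi (m + 2)).Finite := shi_add_two m ▸ (finite_pointedShi _).insert _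
  have hupper : {x : Fin (m + 2) → ℝ | 0 < coordDiff 0 1 0 x} ∩ {x | 0 < coordDiff 0 1 1 x} =
      {x | 0 < coordDiff 0 1 1 x} := by
    refine Set.inter_eq_right.2 fun x hx ↦ ?_
    simp only [Set.mem_ofPred_eq, coordDiff_apply] at hx ⊢
    linarith
  have htotal : cellCount (shi (m + 2)) Set.univ = (m + 3) ^ (m + 1) := cellCount_shi (m + 1)
  rw [cellCount_eq_add_of_mem hfinite (coordDiff_zero_mem_shi Fin.zero_lt_one),
    Set.univ_inter, Set.univ_inter,
    cellCount_eq_add_of_mem hfinite (coordDiff_one_mem_shi Fin.zero_lt_one)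
      {x | 0 < coordDiff 0 1 0 x}, hupper, ← Set.ofPred_and] at htotal
  linarith

lemma cellCount_wall_le_middle (m : ℕ) :
    (m + 3) ^ m ≤
      cellCount (shi (m + 2)) {x | 0 < coordDiff 0 1 0 x ∧ coordDiff 0 1 1 x < 0} := by
  rw [shi_add_two, cellCount_insert_of_neg fun _ hx ↦ hx.2, ← cellCount_wall]
  refine cellCount_eq_zero_le_neg_of_pos_on_wall (finite_pointedShi _)
    (coordDiff_linear_ne_zero Fin.zero_ne_one _) ?_ fun x hx ↦ ?_
  · rw [pointedShi_stair_one_one]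
    exact Set.mem_insert _ _
  · rw [coordDiff_apply] at hx ⊢
    linarith

lemma cellCount_wall_le_upper (m : ℕ) :
    (m + 3) ^ m ≤ cellCount (shi (m + 2)) {x | 0 < coordDiff 0 1 1 x} := by
  rw [shi_add_two, cellCount_insert_of_pos (W := {x | 0 < coordDiff 0 1 1 x}) fun _ hx ↦ hx,
    ← cellCount_wall]
  exact cellCount_eq_zero_le_pos (finite_pointedShi _)
    (coordDiff_linear_ne_zero Fin.zero_ne_one _)

end Slabs

section Majorisation

variable {a e p₁ p₂ p₃ r₁ r₂ r₃ s₁ s₂ s₃ : ℕ}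

lemma eq_of_triple_eq (hp : ({p₁, p₂, p₃} : Multiset ℕ) = {a, e, a})
    (hea : e ≤ a) (hp₁₂ : p₂ ≤ p₁) (hp₂₃ : p₃ ≤ p₂) : p₁ = a ∧ p₂ = a ∧ p₃ = e := by
  have hmem : ∀ p ∈ ({p₁, p₂, p₃} : Multiset ℕ), p = a ∨ p = e := by
    intro p h
    rw [hp] at h
    simpa [or_comm] using h
  have hsum := congrArg Multiset.sum hp
  simp only [Multiset.insert_eq_cons, Multiset.mem_cons, Multiset.mem_singleton,
    forall_eq_or_imp, forall_eq, Multiset.sum_cons, Multiset.sum_singleton] at hmem hsum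
  omega

lemma majorises_of_mem_Icc (hp : ({p₁, p₂, p₃} : Multiset ℕ) = {a, e, a})
    (hp₁₂ : p₂ ≤ p₁) (hp₂₃ : p₃ ≤ p₂) (hr : ({r₁, r₂, r₃} : Multiset ℕ) = {s₁, s₂, s₃})
    (hs₁ : s₁ ∈ Set.Icc e a) (hs₂ : s₂ ∈ Set.Icc e a) (hs₃ : s₃ ∈ Set.Icc e a)
    (hsum : s₁ + s₂ + s₃ = 2 * a + e) :
    r₁ ≤ p₁ ∧ r₁ + r₂ ≤ p₁ + p₂ ∧ p₁ + p₂ + p₃ = r₁ + r₂ + r₃ := by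
  obtain ⟨rfl, rfl, rfl⟩ := eq_of_triple_eq hp (hs₁.1.trans hs₁.2) hp₁₂ hp₂₃
  have hmem : ∀ r ∈ ({r₁, r₂, r₃} : Multiset ℕ), r ∈ Set.Icc p₃ p₂ := by
    rw [hr]
    simpa using ⟨hs₁, hs₂, hs₃⟩
  have hrsum := congrArg Multiset.sum hr
  simp only [Multiset.insert_eq_cons, Multiset.mem_cons, Multiset.mem_singleton, Set.mem_Icc,
    forall_eq_or_imp, forall_eq, Multiset.sum_cons, Multiset.sum_singleton] at hmem hrsum
  omega

end Majorisation

/-- The sorted parking partition `(p1, p2, p3)` majorises the sorted tree-poset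
(region) partition `(r1, r2, r3)`. -/
theorem parking_partition_majorises_region_partition (n : ℕ) (hn : 2 ≤ n)
    (p1 p2 p3 r1 r2 r3 : ℕ)
    (hp : ({p1, p2, p3} : Multiset ℕ) =
      {Set.ncard {a : Fin n → ℕ | IsPF n a ∧ a ⟨1, by omega⟩ < a ⟨0, by omega⟩},
        Set.ncard {a : Fin n → ℕ | IsPF n a ∧ a ⟨0, by omega⟩ = a ⟨1, by omega⟩},
        Set.ncard {a : Fin n → ℕ | IsPF n a ∧ a ⟨0, by omega⟩ < a ⟨1, by omega⟩}})
    (hp12 : p2 ≤ p1) (hp23 : p3 ≤ p2)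
    (hr : ({r1, r2, r3} : Multiset ℕ) =
      {Set.ncard {R : Set (Fin n → ℝ) | IsShiRegion n R ∧
          ∀ x ∈ R, x ⟨0, by omega⟩ - x ⟨1, by omega⟩ < 0},
        Set.ncard {R : Set (Fin n → ℝ) | IsShiRegion n R ∧
          ∀ x ∈ R, 0 < x ⟨0, by omega⟩ - x ⟨1, by omega⟩ ∧
            x ⟨0, by omega⟩ - x ⟨1, by omega⟩ < 1},
        Set.ncard {R : Set (Fin n → ℝ) | IsShiRegion n R ∧
          ∀ x ∈ R, 1 < x ⟨0, by omega⟩ - x ⟨1, by omega⟩}})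
    (hr12 : r2 ≤ r1) (hr23 : r3 ≤ r2) :
    r1 ≤ p1 ∧ r1 + r2 ≤ p1 + p2 ∧ p1 + p2 + p3 = r1 + r2 + r3 := by
  obtain ⟨m, rfl⟩ := Nat.exists_eq_add_of_le' hn
  simp only [Fin.zero_eta, Fin.mk_one, ncard_isShiRegion_lt_zero Fin.zero_lt_one,
    ncard_isShiRegion_mem_Ioo Fin.zero_lt_one, ncard_isShiRegion_one_lt Fin.zero_lt_one,
    ncard_isPF_lt_comm (1 : Fin (m + 2)) 0, ncard_isPF_zero_eq_one] at hp hr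
  have hparking := two_mul_ncard_isPF_lt_add (0 : Fin (m + 2)) 1
  rw [ncard_isPF_zero_eq_one, ncard_isPF] at hparking
  have hlower := two_mul_cellCount_neg_add m
  have hslabs := cellCount_slabs_add m
  have hmiddle := cellCount_wall_le_middle m
  have hupper := cellCount_wall_le_upper m
  exact majorises_of_mem_Icc hp hp12 hp23 hr ⟨by lia, by lia⟩ ⟨hmiddle, by lia⟩
    ⟨hupper, by lia⟩ (by lia)
end
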